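/- arXiv:alg-geom/9610006 — 2 statements merged into one kernel-verified Lean document; each statement's English description precedes it below -/
import Mathlib

section
/- Let k be a perfect field and I ⊆ k[x_0,...,x_n] a homogeneous unmixed radical ideal of projective dimension d ≥ 0. Then for all m ≥ 1, h_I(m) ≤ C(m + deg I + d, d+1) − C(m+d, d+1). -/
open MvPolynomial

/-- Integer-valued binomial coefficient `C(a, b)`, zero when `a < 0` or `a < b`. -/
def ichoose (a : ℤ) (b : ℕ) : ℤ := if a < 0 then 0 else (a.toNat).choose b

/-- The Hilbert function of a (homogeneous) ideal `I ⊆ k[x₀, …, xₙ]`: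
`m ↦ dim_k (k[x₀, …, xₙ]/I)_m`. -/
noncomputable def hilbF (k : Type*) [Field k] {n : ℕ}
    (I : Ideal (MvPolynomial (Fin (n+1)) k)) (m : ℕ) : ℕ :=
  Module.finrank k ((homogeneousSubmodule (Fin (n+1)) k m).map
    (Ideal.Quotient.mkₐ k I).toLinearMap)

open scoped Classical in
/-- The Hilbert polynomial of `I` (the polynomial agreeing with the Hilbert
function for all large `m`; junk value `0` if none exists). -/
noncomputable def hilbP (k : Type*) [Field k] {n : ℕ}
    (I : Ideal (MvPolynomial (Fin (n+1)) k)) : Polynomial ℚ :=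
  if h : ∃ P : Polynomial ℚ, ∀ᶠ m : ℕ in Filter.atTop,
      (hilbF k I m : ℚ) = P.eval (m : ℚ) then h.choose else 0

/-- The (algebraic) degree of a homogeneous ideal `I` of projective dimension
`d ≥ 0`: `d! · (leading coefficient of its Hilbert polynomial)`. -/
noncomputable def idealDeg (k : Type*) [Field k] {n : ℕ}
    (I : Ideal (MvPolynomial (Fin (n+1)) k)) : ℕ :=
  ⌊((hilbP k I).natDegree.factorial : ℚ) * (hilbP k I).leadingCoeff⌋₊

/-- The projective dimension of a homogeneous ideal `I` (of dimension `≥ 0`):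
the degree of its Hilbert polynomial. -/
noncomputable def idealDim (k : Type*) [Field k] {n : ℕ}
    (I : Ideal (MvPolynomial (Fin (n+1)) k)) : ℕ :=
  (hilbP k I).natDegree

/-- A homogeneous ideal: one containing all homogeneous components of its elements. -/
def IsHomogeneousIdeal {k : Type*} [Field k] {n : ℕ}
    (I : Ideal (MvPolynomial (Fin (n+1)) k)) : Prop :=
  ∀ f ∈ I, ∀ m : ℕ, homogeneousComponent m f ∈ I

/-- `I` is unmixed of projective dimension `d`: every associated prime `P` of
`k[x₀,…,xₙ]/I` satisfies `dim k[x₀,…,xₙ]/P = d + 1` (affine Krull dimension). -/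
def IsUnmixed (k : Type*) [Field k] {n : ℕ}
    (I : Ideal (MvPolynomial (Fin (n+1)) k)) (d : ℕ) : Prop :=
  ∀ P ∈ associatedPrimes (MvPolynomial (Fin (n+1)) k)
      (MvPolynomial (Fin (n+1)) k ⧸ I),
    ringKrullDim (MvPolynomial (Fin (n+1)) k ⧸ P) = ((d + 1 : ℕ) : WithBot (WithTop ℕ))

section
open MvPolynomial

namespace HilbBound
section graded
variable {K S : Type*} [Field K] [CommRing S] [Algebra K S]
  (𝒮 : ℕ → Submodule K S) [GradedAlgebra 𝒮]

theorem aeval_mem {r : ℕ} (y : Fin r → S) (hy : ∀ i, y i ∈ 𝒮 1)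
    {F : MvPolynomial (Fin r) K} {N : ℕ} (hF : F.IsHomogeneous N) : aeval y F ∈ 𝒮 N := by
  rw [aeval_def, eval₂_eq]
  refine Submodule.sum_mem _ fun β hβ => ?_
  rw [← Algebra.smul_def]
  refine Submodule.smul_mem _ _ ?_
  have h := SetLike.prod_pow_mem_graded (A := 𝒮) (fun _ => 1) y (fun i : Fin r => β i)
    (F := Finset.univ) (fun i _ => hy i)
  have h2 : ∑ i, β i • 1 = N := by
    have := hF.degree_eq_sum_deg_support hβ
    simp only [smul_eq_mul, mul_one]
    rw [this]
    exact (Finset.sum_subset (Finset.subset_univ _) (by intro x _ hx; simpa using hx)).symm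
  rw [h2] at h
  convert h using 1
  exact Finset.prod_subset (Finset.subset_univ _) (by intro x _ hx; simp at hx; simp [hx])

theorem aeval_comp_eq_zero {r : ℕ} (y : Fin r → S) (hy : ∀ i, y i ∈ 𝒮 1)
    (F : MvPolynomial (Fin r) K) (N : ℕ) :
    GradedRing.proj 𝒮 N (aeval y F) = aeval y (homogeneousComponent N F) := by
  conv_lhs => rw [← sum_homogeneousComponent F]
  rw [map_sum, map_sum]
  have key : ∀ i, GradedRing.proj 𝒮 N (aeval y (homogeneousComponent i F)) =
      if i = N then aeval y (homogeneousComponent N F) else 0 := by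
    intro i
    have hm := aeval_mem 𝒮 y hy (homogeneousComponent_isHomogeneous i F)
    rw [GradedRing.proj_apply]
    split_ifs with h
    · subst h; exact DirectSum.decompose_of_mem_same _ hm
    · exact DirectSum.decompose_of_mem_ne _ hm h
  simp_rw [key]
  rw [Finset.sum_ite_eq']
  split_ifs with h
  · rfl
  · rw [homogeneousComponent_eq_zero, map_zero]
    simpa using h

variable {r : ℕ} [Algebra (MvPolynomial (Fin r) K) S] [IsScalarTower K (MvPolynomial (Fin r) K) S]

theorem algebraMap_eq_aeval (c : MvPolynomial (Fin r) K) :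
    algebraMap (MvPolynomial (Fin r) K) S c =
      aeval (fun i => algebraMap (MvPolynomial (Fin r) K) S (X i)) c := by
  have : IsScalarTower.toAlgHom K (MvPolynomial (Fin r) K) S =
    aeval (fun i => algebraMap (MvPolynomial (Fin r) K) S (X i)) := by
    ext i; simp
  exact congrArg (fun f => f c) this

/-- component of a scalar multiple -/
theorem proj_smul (hX : ∀ i : Fin r, algebraMap (MvPolynomial (Fin r) K) S (X i) ∈ 𝒮 1)
    (c : MvPolynomial (Fin r) K) {e : S} {ε : ℕ} (he : e ∈ 𝒮 ε) (M : ℕ) :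
    GradedRing.proj 𝒮 M (c • e) =
      (if ε ≤ M then homogeneousComponent (M - ε) c else 0) • e := by
  rw [GradedRing.proj_apply, Algebra.smul_def, DirectSum.coe_decompose_mul_of_right_mem 𝒮 M he]
  split_ifs with h
  · rw [← GradedRing.proj_apply, Algebra.smul_def, algebraMap_eq_aeval,
      aeval_comp_eq_zero 𝒮 _ hX, ← algebraMap_eq_aeval]
  · simp

theorem smul_mem_graded (hX : ∀ i : Fin r, algebraMap (MvPolynomial (Fin r) K) S (X i) ∈ 𝒮 1)
    {c : MvPolynomial (Fin r) K} {α : ℕ} (hc : c.IsHomogeneous α) {e : S} {ε : ℕ}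
    (he : e ∈ 𝒮 ε) : c • e ∈ 𝒮 (α + ε) := by
  rw [Algebra.smul_def, algebraMap_eq_aeval]
  exact SetLike.mul_mem_graded (aeval_mem 𝒮 _ hX hc) he

theorem exists_basis (hX : ∀ i : Fin r, algebraMap (MvPolynomial (Fin r) K) S (X i) ∈ 𝒮 1)
    [Module.Finite (MvPolynomial (Fin r) K) S] :
    ∃ (ρ : ℕ) (e : Fin ρ → S) (ε : Fin ρ → ℕ) (a : MvPolynomial (Fin r) K) (α : ℕ),
      LinearIndependent (MvPolynomial (Fin r) K) e ∧ (∀ i, e i ∈ 𝒮 (ε i)) ∧ a ≠ 0 ∧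
      a.IsHomogeneous α ∧ ∀ s : S, a • s ∈ Submodule.span (MvPolynomial (Fin r) K) (Set.range e) := by
  classical
  obtain ⟨T, hT⟩ := (Module.Finite.fg_top : (⊤ : Submodule (MvPolynomial (Fin r) K) S).FG)
  let ι := Σ t : T, (DirectSum.decompose 𝒮 (t : S)).support
  let v : ι → S := fun x => (DirectSum.decompose 𝒮 (x.1 : S)) (x.2 : ℕ)
  have hv : ∀ x : ι, v x ∈ 𝒮 (x.2 : ℕ) := fun x => Subtype.mem _
  have hspan : Submodule.span (MvPolynomial (Fin r) K) (Set.range v) = ⊤ := by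
    rw [eq_top_iff, ← hT, Submodule.span_le]
    intro t ht
    rw [← DirectSum.sum_support_decompose 𝒮 t]
    refine Submodule.sum_mem _ fun i hi => Submodule.subset_span ⟨⟨⟨t, ht⟩, ⟨i, hi⟩⟩, rfl⟩
  obtain ⟨s, hs, hmax⟩ := exists_maximal_linearIndepOn (MvPolynomial (Fin r) K) v
  have : Fintype ι := Fintype.ofFinite _
  let eq := Fintype.equivFin s
  let e : Fin (Fintype.card s) → S := fun i => v (eq.symm i)
  have hrange : Set.range e = v '' s := by
    ext x; constructor
    · rintro ⟨i, rfl⟩; exact ⟨_, (eq.symm i).2, rfl⟩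
    · rintro ⟨i, hi, rfl⟩; exact ⟨eq ⟨i, hi⟩, by simp [e]⟩
  have hli : LinearIndependent (MvPolynomial (Fin r) K) e :=
    (LinearIndependent.comp hs eq.symm eq.symm.injective)
  have he : ∀ i, e i ∈ 𝒮 ((eq.symm i).1.2 : ℕ) := fun i => hv _
  have step : ∀ x : ι, ∃ (a : MvPolynomial (Fin r) K) (α : ℕ), a ≠ 0 ∧ a.IsHomogeneous α ∧
      a • v x ∈ Submodule.span (MvPolynomial (Fin r) K) (Set.range e) := by
    intro x
    by_cases hx : x ∈ s
    · exact ⟨1, 0, one_ne_zero, isHomogeneous_one _ _, by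
        rw [one_smul, hrange]; exact Submodule.subset_span ⟨x, hx, rfl⟩⟩
    · obtain ⟨a, ha, hmem⟩ := hmax x hx
      rw [← hrange, Submodule.mem_span_range_iff_exists_fun] at hmem
      obtain ⟨c, hc⟩ := hmem
      obtain ⟨N, hN⟩ : ∃ N, homogeneousComponent N a ≠ 0 := by
        by_contra! h
        apply ha
        rw [← sum_homogeneousComponent a]
        exact Finset.sum_eq_zero fun i _ => h i
      refine ⟨homogeneousComponent N a, N, hN, homogeneousComponent_isHomogeneous _ _, ?_⟩
      have := congrArg (GradedRing.proj 𝒮 (N + (x.2 : ℕ))) hc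
      rw [proj_smul 𝒮 hX a (hv x), map_sum, if_pos (by omega), Nat.add_sub_cancel] at this
      rw [← this]
      refine Submodule.sum_mem _ fun i _ => ?_
      rw [proj_smul 𝒮 hX _ (he i)]
      exact Submodule.smul_mem _ _ (Submodule.subset_span ⟨i, rfl⟩)
  choose a α ha hhom hmem using step
  refine ⟨_, e, _, ∏ x, a x, ∑ x, α x, hli, he, Finset.prod_ne_zero_iff.mpr fun i _ => ha i,
    IsHomogeneous.prod _ _ _ fun i _ => hhom i, ?_⟩
  intro t
  have ht : t ∈ Submodule.span (MvPolynomial (Fin r) K) (Set.range v) := by rw [hspan]; trivial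
  induction ht using Submodule.span_induction with
  | mem x hx =>
    obtain ⟨i, rfl⟩ := hx
    rw [← Finset.mul_prod_erase _ _ (Finset.mem_univ i), mul_comm, mul_smul]
    exact Submodule.smul_mem _ _ (hmem i)
  | zero => simp
  | add x y _ _ hx hy => rw [smul_add]; exact Submodule.add_mem _ hx hy
  | smul c x _ hx => rw [smul_comm]; exact Submodule.smul_mem _ _ hx

end graded
end HilbBound

end

section
open MvPolynomial

namespace HilbBound

theorem card_antidiag (d m : ℕ) :
    ((Finset.univ : Finset (Fin (d+1))).finsuppAntidiag m).card = (m + d).choose d := by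
  rw [Finset.card_finsuppAntidiag_nat_eq_choose]
  simp only [Finset.card_univ, Fintype.card_fin]
  rw [show d + 1 + m - 1 = m + d by omega]
  exact (Nat.choose_symm_add)

theorem finrank_homog (K : Type*) [Field K] (d m : ℕ) :
    Module.finrank K (homogeneousSubmodule (Fin (d+1)) K m) = (m + d).choose d := by
  have e1 : {f : Fin (d+1) →₀ ℕ | f.degree = m} =
      (((Finset.univ : Finset (Fin (d+1))).finsuppAntidiag m : Finset _) : Set (Fin (d+1) →₀ ℕ)) := by
    ext f
    simp [Finset.mem_finsuppAntidiag, Finsupp.degree_eq_sum]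
  rw [homogeneousSubmodule_eq_finsupp_supported, e1, ← card_antidiag]
  have := (AddMonoidAlgebra.supportedEquivFinsupp (R := K) (S := K) ((((Finset.univ : Finset (Fin (d+1))).finsuppAntidiag m : Finset _) : Set (Fin (d+1) →₀ ℕ)))).finrank_eq
  rw [this]
  simp

section lower
variable {K S : Type*} [Field K] [CommRing S] [Algebra K S]
  (𝒮 : ℕ → Submodule K S) [GradedAlgebra 𝒮] [∀ m, FiniteDimensional K (𝒮 m)]
variable {d : ℕ} [Algebra (MvPolynomial (Fin (d+1)) K) S]
  [IsScalarTower K (MvPolynomial (Fin (d+1)) K) S]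

theorem lower_bound (hX : ∀ i : Fin (d+1), algebraMap (MvPolynomial (Fin (d+1)) K) S (X i) ∈ 𝒮 1)
    {ρ : ℕ} (e : Fin ρ → S) (ε : Fin ρ → ℕ)
    (hli : LinearIndependent (MvPolynomial (Fin (d+1)) K) e) (he : ∀ i, e i ∈ 𝒮 (ε i)) :
    ∃ c : ℕ, ∀ m, c ≤ m → ρ * (m - c + d).choose d ≤ Module.finrank K (𝒮 m) := by
  refine ⟨∑ i, ε i, fun m hm => ?_⟩
  have hle : ∀ i, ε i ≤ ∑ i, ε i := fun i =>
    Finset.single_le_sum (f := ε) (fun _ _ => Nat.zero_le _) (Finset.mem_univ i)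
  let g : (∀ i : Fin ρ, homogeneousSubmodule (Fin (d+1)) K (m - ε i)) →ₗ[K] 𝒮 m :=
    { toFun := fun c => ⟨∑ i, (c i : MvPolynomial (Fin (d+1)) K) • e i, by
        refine Submodule.sum_mem _ fun i _ => ?_
        have := smul_mem_graded 𝒮 hX ((mem_homogeneousSubmodule _ _).1 (c i).2) (he i)
        rwa [Nat.sub_add_cancel ((hle i).trans hm)] at this⟩
      map_add' := by
        intro x y; ext; simp [add_smul, Finset.sum_add_distrib]
      map_smul' := by
        intro x y; ext; simp [Finset.smul_sum] }
  have hg : Function.Injective g := by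
    rw [injective_iff_map_eq_zero]
    intro c hc
    have h1 : ∑ i, (c i : MvPolynomial (Fin (d+1)) K) • e i = 0 := congrArg Subtype.val hc
    have h2 := Fintype.linearIndependent_iff.1 hli _ h1
    ext i : 2
    exact h2 i
  have := LinearMap.finrank_le_finrank_of_injective hg
  have hfin : ∀ i, Module.Finite K (homogeneousSubmodule (Fin (d+1)) K i) := fun i =>
    Module.Finite.iff_fg.2 (homogeneousSubmodule_fg _ _ _)
  rw [Module.finrank_pi_fintype] at this
  refine le_trans ?_ this
  simp_rw [finrank_homog]
  calc ρ * (m - ∑ i, ε i + d).choose d = ∑ i : Fin ρ, (m - ∑ i, ε i + d).choose d := by simp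
    _ ≤ _ := Finset.sum_le_sum fun i _ => Nat.choose_le_choose _ (by have := hle i; omega)

end lower
end HilbBound

end

section
open MvPolynomial

namespace HilbBound

set_option linter.unusedSectionVars false
section upper
variable {K S : Type*} [Field K] [Infinite K] [CommRing S] [Algebra K S]
  (𝒮 : ℕ → Submodule K S) [GradedAlgebra 𝒮] [∀ m, FiniteDimensional K (𝒮 m)]
variable {d : ℕ} [Algebra (MvPolynomial (Fin (d+1)) K) S]
  [IsScalarTower K (MvPolynomial (Fin (d+1)) K) S]

/-- substitution `(Y₀, Yᵢ) ↦ (p₀, pᵢ + Zᵢ)` -/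
noncomputable def subst (p : Fin (d+1) → K) : MvPolynomial (Fin (d+1)) K →ₐ[K] MvPolynomial (Fin d) K :=
  aeval (Fin.cons (C (p 0)) fun i => X i + C (p i.succ))

theorem eval_subst (p : Fin (d+1) → K) (z : Fin d → K) (F : MvPolynomial (Fin (d+1)) K) :
    eval z (subst p F) = eval (Fin.cons (p 0) fun i => z i + p i.succ) F := by
  have : (aeval z).comp (subst p) = aeval (R := K) (Fin.cons (p 0) fun i => z i + p i.succ) := by
    ext i
    refine Fin.cases ?_ (fun i => ?_) i <;> simp [subst]
  have h := congrArg (fun f => f F) this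
  simpa [aeval_eq_eval] using h

theorem eval_smul_homog {r : ℕ} {F : MvPolynomial (Fin r) K} {N : ℕ} (hF : F.IsHomogeneous N)
    (t : K) (z : Fin r → K) : eval (fun i => t * z i) F = t ^ N * eval z F := by
  rw [eval_eq, eval_eq, Finset.mul_sum]
  refine Finset.sum_congr rfl fun β hβ => ?_
  have := hF.degree_eq_sum_deg_support hβ
  simp_rw [mul_pow, Finset.prod_mul_distrib, Finset.prod_pow_eq_pow_sum]
  rw [← this]
  ring

theorem subst_inj (p : Fin (d+1) → K) (hp : p 0 ≠ 0) {F : MvPolynomial (Fin (d+1)) K} {N : ℕ}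
    (hF : F.IsHomogeneous N) (h : subst p F = 0) : F = 0 := by
  have hz : ∀ w : Fin d → K, eval (Fin.cons (p 0) w : Fin (d+1) → K) F = 0 := by
    intro w
    have := eval_subst p (fun i => w i - p i.succ) F
    rw [h] at this
    simpa using this.symm
  have h2 : F * X 0 = 0 := by
    apply MvPolynomial.funext
    intro x
    simp only [map_mul, eval_X, map_zero]
    by_cases hx : x 0 = 0
    · rw [hx, mul_zero]
    · have : x = fun i => (x 0 / p 0) *
          (Fin.cons (p 0) (fun i : Fin d => p 0 / x 0 * x i.succ) : Fin (d+1) → K) i := by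
        funext i
        refine Fin.cases ?_ (fun i => ?_) i
        · simp; field_simp
        · simp; field_simp
      rw [this, eval_smul_homog hF, hz]
      simp
  exact (mul_eq_zero.1 h2).resolve_right (X_ne_zero _)

theorem totalDegree_subst (p : Fin (d+1) → K) {F : MvPolynomial (Fin (d+1)) K} {N : ℕ}
    (hF : F.totalDegree ≤ N) : (subst p F).totalDegree ≤ N := by
  rw [subst, aeval_def, eval₂_eq]
  refine totalDegree_finsetSum_le fun β hβ => ?_
  refine (totalDegree_mul _ _).trans ?_
  rw [algebraMap_eq, totalDegree_C, zero_add]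
  refine (totalDegree_finsetProd _ _).trans ?_
  refine le_trans ?_ ((le_totalDegree hβ).trans hF)
  refine Finset.sum_le_sum fun i _ => ?_
  refine (totalDegree_pow _ _).trans ?_
  refine mul_le_of_le_one_right (Nat.zero_le _) ?_
  refine Fin.cases ?_ (fun i => ?_) i
  · simp
  · simp only [Fin.cons_succ]
    exact (totalDegree_add _ _).trans (by simp)

/-- order of vanishing at `p` -/
noncomputable def ordp (p : Fin (d+1) → K) (F : MvPolynomial (Fin (d+1)) K) : ℕ∞ :=
  MvPowerSeries.order (subst p F : MvPowerSeries (Fin d) K)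

theorem ordp_mul (p : Fin (d+1) → K) (F G : MvPolynomial (Fin (d+1)) K) :
    ordp p F + ordp p G ≤ ordp p (F * G) := by
  unfold ordp
  rw [map_mul, MvPolynomial.coe_mul]
  exact MvPowerSeries.le_order_mul

theorem ordp_sum (p : Fin (d+1) → K) {ι : Type*} (s : Finset ι)
    (F : ι → MvPolynomial (Fin (d+1)) K) (u : ℕ∞) (h : ∀ i ∈ s, u ≤ ordp p (F i)) :
    u ≤ ordp p (∑ i ∈ s, F i) := by
  classical
  induction s using Finset.induction_on with
  | empty => simp [ordp]
  | insert i s hi ih =>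
    rw [Finset.sum_insert hi]
    refine le_trans (le_min (h i (by simp)) (ih fun j hj => h j (by simp [hj]))) ?_
    unfold ordp
    rw [map_add, MvPolynomial.coe_add]
    exact MvPowerSeries.min_order_le_add

theorem ordp_cancel (p : Fin (d+1) → K) {a F : MvPolynomial (Fin (d+1)) K} (ha : eval p a ≠ 0) :
    ordp p (a * F) ≤ ordp p F := by
  have hu : IsUnit (subst p a : MvPowerSeries (Fin d) K) := by
    rw [MvPowerSeries.isUnit_iff_constantCoeff, isUnit_iff_ne_zero]
    have h1 := eval_subst p (fun _ => 0) a
    have h2 : (Fin.cons (p 0) fun i : Fin d => (0:K) + p i.succ : Fin (d+1) → K) = p := by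
      funext i; refine Fin.cases ?_ (fun i => ?_) i <;> simp
    rw [h2] at h1
    rw [← h1, MvPolynomial.eval_zero'] at ha
    rwa [← MvPowerSeries.coeff_zero_eq_constantCoeff_apply, MvPolynomial.coeff_coe]
  obtain ⟨u, hu⟩ := hu
  have h3 : (subst p F : MvPowerSeries (Fin d) K) = ↑u⁻¹ * (subst p (a * F) : MvPowerSeries (Fin d) K) := by
    rw [map_mul, MvPolynomial.coe_mul, ← hu, Units.inv_mul_cancel_left]
  unfold ordp
  rw [h3]
  exact le_trans le_add_self MvPowerSeries.le_order_mul

theorem ordp_le (p : Fin (d+1) → K) {F : MvPolynomial (Fin (d+1)) K} {N : ℕ} (hF : F.totalDegree ≤ N)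
    (h : subst p F ≠ 0) : ordp p F ≤ N := by
  obtain ⟨β, hβ⟩ := MvPolynomial.ne_zero_iff.1 h
  have h1 : MvPowerSeries.coeff β (subst p F : MvPowerSeries (Fin d) K) ≠ 0 := by
    rwa [MvPolynomial.coeff_coe]
  refine (MvPowerSeries.order_le h1).trans ?_
  have := (le_totalDegree (mem_support_iff.2 hβ)).trans (totalDegree_subst p hF)
  exact_mod_cast this

theorem upper_bound [IsReduced S] (hX : ∀ i : Fin (d+1), algebraMap (MvPolynomial (Fin (d+1)) K) S (X i) ∈ 𝒮 1)
    (htf : ∀ (a : MvPolynomial (Fin (d+1)) K) (s : S), a • s = 0 → a = 0 ∨ s = 0)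
    {ρ : ℕ} (e : Fin ρ → S) (ε : Fin ρ → ℕ) (a : MvPolynomial (Fin (d+1)) K) (α : ℕ)
    (hli : LinearIndependent (MvPolynomial (Fin (d+1)) K) e) (he : ∀ i, e i ∈ 𝒮 (ε i))
    (ha : a ≠ 0) (hα : a.IsHomogeneous α)
    (hspan : ∀ s : S, a • s ∈ Submodule.span (MvPolynomial (Fin (d+1)) K) (Set.range e)) (m : ℕ) :
    Module.finrank K (𝒮 m) ≤ ρ * (m + d).choose d := by
  classical
  -- the point
  obtain ⟨p, hp⟩ : ∃ p : Fin (d+1) → K, eval p (a * X 0) ≠ 0 := by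
    by_contra! h
    have : a * X 0 = 0 := MvPolynomial.funext fun x => by rw [h x, map_zero]
    exact ha ((mul_eq_zero.1 this).resolve_right (X_ne_zero _))
  rw [map_mul, eval_X] at hp
  have hpa := left_ne_zero_of_mul hp
  have hp0 := right_ne_zero_of_mul hp
  -- coordinates
  let c : S →ₗ[MvPolynomial (Fin (d+1)) K] (Fin ρ →₀ MvPolynomial (Fin (d+1)) K) :=
    hli.repr ∘ₗ LinearMap.codRestrict _ (LinearMap.lsmul _ S a) hspan
  have hc : ∀ s, ∑ i, c s i • e i = a • s := by
    intro s
    have := hli.linearCombination_repr ⟨a • s, hspan s⟩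
    rw [Finsupp.linearCombination_apply, Finsupp.sum_fintype _ _ (by simp)] at this
    exact this
  have huniq : ∀ (s : S) (b : Fin ρ → MvPolynomial (Fin (d+1)) K), ∑ i, b i • e i = a • s →
      ∀ i, c s i = b i := by
    intro s b hb i
    have h0 : ∑ i, (c s i - b i) • e i = 0 := by
      simp_rw [sub_smul, Finset.sum_sub_distrib]; rw [hc, hb, sub_self]
    exact sub_eq_zero.1 (Fintype.linearIndependent_iff.1 hli _ h0 i)
  have hchom : ∀ (M : ℕ) (s : S), s ∈ 𝒮 M → ∀ i, ∃ N ≤ M + α, (c s i).IsHomogeneous N := by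
    intro M s hs i
    have h1 := congrArg (GradedRing.proj 𝒮 (α + M)) (hc s)
    rw [proj_smul 𝒮 hX a hs, if_pos (by omega), Nat.add_sub_cancel, homogeneousComponent_eq_self hα,
      map_sum] at h1
    simp_rw [fun j => proj_smul 𝒮 hX (c s j) (he j)] at h1
    rw [huniq s _ h1 i]
    split_ifs with h
    · exact ⟨α + M - ε i, by omega, homogeneousComponent_isHomogeneous _ _⟩
    · exact ⟨0, by omega, isHomogeneous_zero _ _ _⟩
  have hmul : ∀ s t l, a * c (s * t) l = ∑ i, c s i * c (e i * t) l := by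
    intro s t l
    have h1 : a • (s * t) = ∑ i, c s i • (e i * t) := by
      rw [← smul_mul_assoc, ← hc s, Finset.sum_mul]
      simp_rw [smul_mul_assoc]
    have h2 := congrArg (fun x => c x l) h1
    simpa [map_sum, Finsupp.finsetSum_apply] using h2
  have hbig0 : ∀ s u, (∀ l, u ≤ ordp p (c s l)) → ∀ t l, u ≤ ordp p (c (s * t) l) := by
    intro s u hs t l
    refine le_trans ?_ (ordp_cancel p hpa)
    rw [hmul]
    refine ordp_sum _ _ _ _ fun i _ => ?_
    exact (hs i).trans (le_trans le_self_add (ordp_mul _ _ _))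
  have hbig : ∀ s t u v, (∀ l, u ≤ ordp p (c s l)) → (∀ l, v ≤ ordp p (c t l)) →
      ∀ l, u + v ≤ ordp p (c (s * t) l) := by
    intro s t u v hs ht l
    refine le_trans ?_ (ordp_cancel p hpa)
    rw [hmul]
    refine ordp_sum _ _ _ _ fun i _ => ?_
    refine le_trans (add_le_add (hs i) ?_) (ordp_mul _ _ _)
    rw [mul_comm]
    exact hbig0 t v ht _ l
  have hpow : ∀ s (u : ℕ), (∀ l, (u : ℕ∞) ≤ ordp p (c s l)) → ∀ q : ℕ, ∀ l,
      ((q * u : ℕ) : ℕ∞) ≤ ordp p (c (s ^ q) l) := by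
    intro s u hs q
    induction q with
    | zero => intro l; simp
    | succ q ih =>
      intro l
      rw [pow_succ, add_mul, one_mul, Nat.cast_add]
      exact hbig _ _ _ _ ih hs l
  have hvanish : ∀ s ∈ 𝒮 m, (∀ l, ((m + 1 : ℕ) : ℕ∞) ≤ ordp p (c s l)) → s = 0 := by
    intro s hs hord
    have hq := hpow s (m+1) hord (α + 1)
    have hsq : s ^ (α + 1) ∈ 𝒮 ((α + 1) * m) := by
      simpa using SetLike.pow_mem_graded (A := 𝒮) (α + 1) hs
    have hz : ∀ l, c (s ^ (α + 1)) l = 0 := by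
      intro l
      obtain ⟨N, hN, hhom⟩ := hchom _ _ hsq l
      refine subst_inj p hp0 hhom ?_
      by_contra hne
      have h1 := ordp_le p hhom.totalDegree_le hne
      have h2 := (hq l).trans h1
      rw [Nat.cast_le] at h2
      nlinarith
    have h3 := hc (s ^ (α + 1))
    simp_rw [hz, zero_smul, Finset.sum_const_zero] at h3
    have h4 := (htf _ _ h3.symm).resolve_left ha
    exact pow_eq_zero_iff (by omega) |>.1 h4
  -- injection
  let ι := ((Finset.univ : Finset (Fin (d+1))).finsuppAntidiag m)
  let g : 𝒮 m →ₗ[K] (Fin ρ × ι → K) :=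
    { toFun := fun s x => coeff (Finsupp.tail (x.2 : Fin (d+1) →₀ ℕ)) (subst p (c s x.1))
      map_add' := by intro s t; funext x; simp
      map_smul' := by
        intro t s; funext x
        have : c (t • (s : S)) x.1 = t • c s x.1 := by
          rw [← algebraMap_smul (MvPolynomial (Fin (d+1)) K) t (s : S), map_smul]
          simp [algebraMap_eq, smul_eq_C_mul]
        simp [this] }
  have hg : Function.Injective g := by
    rw [injective_iff_map_eq_zero]
    intro s hs
    apply Subtype.ext
    refine hvanish s s.2 fun l => ?_
    refine MvPowerSeries.nat_le_order fun β hβ => ?_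
    rw [MvPolynomial.coeff_coe]
    have hβ' : Finsupp.cons (m - β.degree) β ∈
        (Finset.univ : Finset (Fin (d+1))).finsuppAntidiag m := by
      rw [Finset.mem_finsuppAntidiag]
      refine ⟨?_, Finset.subset_univ _⟩
      rw [Fin.sum_univ_succ]
      simp only [Finsupp.cons_zero, Finsupp.cons_succ]
      rw [← Finsupp.degree_eq_sum]
      omega
    have h5 := congrFun hs (l, ⟨_, hβ'⟩)
    simpa [g] using h5
  have h6 := LinearMap.finrank_le_finrank_of_injective hg
  refine h6.trans (le_of_eq ?_)
  rw [Module.finrank_fintype_fun_eq_card, Fintype.card_prod, Fintype.card_fin, Fintype.card_coe,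
    card_antidiag]

end upper
end HilbBound

end

section
open MvPolynomial

namespace HilbBound
section noether

theorem isIntegral_of_subalgebra {K S : Type*} [Field K] [CommRing S] [Algebra K S]
    (A B : Subalgebra K S) (h : ∀ a ∈ A, IsIntegral B a) (hA : ∀ s : S, IsIntegral A s) (s : S) :
    IsIntegral B s := by
  let C := integralClosure B S
  let f : A →+* C :=
    { toFun := fun a => ⟨a, h a a.2⟩
      map_one' := rfl
      map_mul' := fun _ _ => rfl
      map_zero' := rfl
      map_add' := fun _ _ => rfl }
  have h1 : IsIntegral C s := by
    obtain ⟨p, hp, hps⟩ := hA s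
    refine ⟨p.map f, hp.map f, ?_⟩
    rw [Polynomial.eval₂_map]
    exact hps
  exact isIntegral_trans (R := B) (A := C) s h1

/-- top coefficient in T of a product of linear polynomials -/
theorem coeff_lin {A : Type*} [CommRing A] {ι : Type*} (L : ι → Polynomial A)
    (hL : ∀ i, (L i).natDegree ≤ 1) (β : ι →₀ ℕ) :
    (β.prod fun i e => L i ^ e).natDegree ≤ β.degree ∧
    (β.prod fun i e => L i ^ e).coeff β.degree = β.prod fun i e => (L i).coeff 1 ^ e := by
  classical
  induction β using Finsupp.induction_linear with
  | zero => simp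
  | add f g hf hg =>
    rw [Finsupp.prod_add_index' (by simp) (by intros; rw [pow_add]),
      Finsupp.prod_add_index' (by simp) (by intros; rw [pow_add]), map_add]
    refine ⟨Polynomial.natDegree_mul_le_of_le hf.1 hg.1, ?_⟩
    rw [Polynomial.coeff_mul_add_eq_of_natDegree_le hf.1 hg.1, hf.2, hg.2]
  | single i e =>
    rw [Finsupp.prod_single_index (by simp), Finsupp.prod_single_index (by simp),
      Finsupp.degree_single]
    refine ⟨by simpa using Polynomial.natDegree_pow_le_of_le e (hL i), ?_⟩
    have := Polynomial.coeff_pow_of_natDegree_le (m := e) (hL i)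
    simpa using this

set_option linter.unusedSectionVars false
variable {K S : Type*} [Field K] [Infinite K] [CommRing S] [Nontrivial S] [Algebra K S]
  (𝒮 : ℕ → Submodule K S) [GradedAlgebra 𝒮]

theorem integral_of_relation {r : ℕ} (y0 : S) (y' : Fin r → S) (q : Fin r → K)
    {F : MvPolynomial (Fin (r+1)) K} {N : ℕ} (hF : F.IsHomogeneous N)
    (hq : eval (Fin.cons 1 q : Fin (r+1) → K) F ≠ 0)
    (h0 : aeval (Fin.cons y0 (fun i => y' i + q i • y0) : Fin (r+1) → S) F = 0) :
    IsIntegral (Algebra.adjoin K (Set.range y')) y0 := by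
  set A := Algebra.adjoin K (Set.range y') with hA
  let z : Fin r → A := fun i => ⟨y' i, Algebra.subset_adjoin ⟨i, rfl⟩⟩
  let L : Fin (r+1) → Polynomial A :=
    Fin.cons Polynomial.X fun i => Polynomial.C (z i) + Polynomial.C (algebraMap K A (q i)) * Polynomial.X
  have hL : ∀ i, (L i).natDegree ≤ 1 := by
    intro i
    refine Fin.cases ?_ (fun i => ?_) i
    · exact Polynomial.natDegree_X_le
    · simp only [L, Fin.cons_succ]
      compute_degree
  have hL1 : ∀ i, (L i).coeff 1 = algebraMap K A ((Fin.cons 1 q : Fin (r+1) → K) i) := by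
    intro i
    refine Fin.cases ?_ (fun i => ?_) i
    · simp [L]
    · simp [L, Polynomial.coeff_C]
  let G : Polynomial A := aeval L F
  have hG : G = ∑ β ∈ F.support, algebraMap K (Polynomial A) (coeff β F) * β.prod fun i e => L i ^ e := by
    simp only [G]; rw [aeval_def, eval₂_eq]; rfl
  have hdeg : ∀ β ∈ F.support, β.degree = N := by
    intro β hβ
    have := hF (mem_support_iff.1 hβ)
    rw [← this, Finsupp.degree_eq_weight_one]; rfl
  have hnd : G.natDegree ≤ N := by
    rw [hG]
    refine Polynomial.natDegree_sum_le_of_forall_le _ _ fun β hβ => ?_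
    rw [Polynomial.algebraMap_apply]
    refine (Polynomial.natDegree_C_mul_le _ _).trans ?_
    rw [← hdeg β hβ]
    exact (coeff_lin L hL β).1
  have hco : G.coeff N = algebraMap K A (eval (Fin.cons 1 q : Fin (r+1) → K) F) := by
    rw [hG, Polynomial.finsetSum_coeff, eval_eq, map_sum]
    refine Finset.sum_congr rfl fun β hβ => ?_
    rw [Polynomial.algebraMap_apply, Polynomial.coeff_C_mul, ← hdeg β hβ, (coeff_lin L hL β).2,
      map_mul, map_prod]
    congr 1
    refine Finset.prod_congr rfl fun i _ => ?_
    beta_reduce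
    rw [hL1, map_pow]
  have hev : Polynomial.aeval y0 G = 0 := by
    rw [← h0]
    have : ((Polynomial.aeval (R := A) y0).restrictScalars K).comp (aeval L) =
        aeval (R := K) (Fin.cons y0 (fun i => y' i + q i • y0) : Fin (r+1) → S) := by
      ext i
      refine Fin.cases ?_ (fun i => ?_) i
      · simp [L]
      · simp [L, z, Algebra.smul_def]
    exact congrArg (fun f => f F) this
  set u := eval (Fin.cons 1 q : Fin (r+1) → K) F
  refine ⟨Polynomial.C (algebraMap K A u⁻¹) * G, ?_, ?_⟩
  · refine Polynomial.monic_of_natDegree_le_of_coeff_eq_one N ((Polynomial.natDegree_C_mul_le _ _).trans hnd) ?_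
    rw [Polynomial.coeff_C_mul, hco, ← map_mul, inv_mul_cancel₀ hq, map_one]
  · rw [← Polynomial.aeval_def, map_mul, hev, mul_zero]

theorem exists_noether {n : ℕ} (x : Fin n → S) (hx : ∀ i, x i ∈ 𝒮 1)
    (hgen : Algebra.adjoin K (Set.range x) = ⊤) :
    ∃ (r : ℕ) (y : Fin r → S), (∀ i, y i ∈ 𝒮 1) ∧
      Function.Injective (aeval y : MvPolynomial (Fin r) K →ₐ[K] S) ∧
      ∀ s : S, IsIntegral (Algebra.adjoin K (Set.range y)) s := by
  classical
  have hex : ∃ r : ℕ, ∃ y : Fin r → S, (∀ i, y i ∈ 𝒮 1) ∧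
      ∀ s : S, IsIntegral (Algebra.adjoin K (Set.range y)) s := by
    refine ⟨n, x, hx, fun s => ?_⟩
    exact isIntegral_algebraMap (x := (⟨s, by rw [hgen]; trivial⟩ : Algebra.adjoin K (Set.range x)))
  obtain ⟨y, hy, hIntegral⟩ := Nat.find_spec hex
  have hmin := fun {m} => Nat.find_min hex (m := m)
  generalize Nat.find hex = r at y hy hIntegral hmin
  refine ⟨r, y, hy, ?_, hIntegral⟩
  rw [injective_iff_map_eq_zero]
  intro F0 hF0
  by_contra hne
  obtain ⟨N, hN⟩ : ∃ N, homogeneousComponent N F0 ≠ 0 := by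
    by_contra! h
    exact hne (by rw [← sum_homogeneousComponent F0]; simp [h])
  set F := homogeneousComponent N F0
  have hF : F.IsHomogeneous N := homogeneousComponent_isHomogeneous N F0
  have hF0' : aeval y F = 0 := by
    rw [← aeval_comp_eq_zero 𝒮 y hy, hF0, map_zero]
  rcases r with _ | r
  · rw [MvPolynomial.eq_C_of_isEmpty F] at hF0' hN
    rw [← algebraMap_eq, AlgHom.commutes] at hF0'
    have := (map_eq_zero_iff _ (algebraMap K S).injective).1 hF0'
    exact hN (by rw [this, map_zero])
  · obtain ⟨p, hp⟩ : ∃ p : Fin (r+1) → K, eval p (F * X 0) ≠ 0 := by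
      by_contra! h
      have : F * X 0 = 0 := MvPolynomial.funext fun x => by rw [h x, map_zero]
      exact hN ((mul_eq_zero.1 this).resolve_right (X_ne_zero _))
    rw [map_mul, eval_X] at hp
    have hpF := left_ne_zero_of_mul hp
    have hp0 := right_ne_zero_of_mul hp
    let q : Fin r → K := fun i => p i.succ / p 0
    let y' : Fin r → S := fun i => y i.succ - q i • y 0
    have hq : eval (Fin.cons 1 q : Fin (r+1) → K) F ≠ 0 := by
      intro h
      apply hpF
      have h1 : p = fun i => p 0 * (Fin.cons 1 q : Fin (r+1) → K) i := by
        funext i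
        refine Fin.cases ?_ (fun i => ?_) i
        · simp
        · simp [q]; field_simp
      rw [h1, eval_smul_homog hF, h, mul_zero]
    have hy' : (Fin.cons (y 0) (fun i => y' i + q i • y 0) : Fin (r+1) → S) = y := by
      funext i
      refine Fin.cases ?_ (fun i => ?_) i <;> simp [y']
    have hi0 := integral_of_relation (y 0) y' q hF hq (by rw [hy']; exact hF0')
    refine hmin (Nat.lt_succ_self r) ⟨y', fun i => ?_, isIntegral_of_subalgebra _ _ ?_ hIntegral⟩
    · exact Submodule.sub_mem _ (hy _) (Submodule.smul_mem _ _ (hy _))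
    · have hle : Algebra.adjoin K (Set.range y) ≤
          (integralClosure (Algebra.adjoin K (Set.range y')) S).restrictScalars K := by
        rw [Algebra.adjoin_le_iff]
        rintro _ ⟨i, rfl⟩
        have h2 : IsIntegral (Algebra.adjoin K (Set.range y')) (y i) := by
          rw [← hy']
          refine Fin.cases ?_ (fun i => ?_) i
          · exact hi0
          · simp only [Fin.cons_succ]
            refine IsIntegral.add ?_ ?_
            · exact isIntegral_algebraMap (x := (⟨y' i, Algebra.subset_adjoin ⟨i, rfl⟩⟩ : Algebra.adjoin K (Set.range y')))
            · rw [Algebra.smul_def]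
              exact IsIntegral.mul (isIntegral_algebraMap (x := algebraMap K (Algebra.adjoin K (Set.range y')) (q i))) hi0
        exact h2
      exact fun a ha => hle ha

end noether
end HilbBound

end

section
open MvPolynomial
open scoped TensorProduct

namespace HilbBound
set_option linter.style.haveILetI false
section krull

theorem krull_le_of_integral (A B : Type*) [CommRing A] [CommRing B] [Algebra A B]
    [Algebra.IsIntegral A B] : ringKrullDim B ≤ ringKrullDim A := by
  refine Order.krullDim_le_of_strictMono (PrimeSpectrum.comap (algebraMap A B)) ?_
  intro P Q hPQ
  obtain ⟨x, hx⟩ := Set.exists_of_ssubset (SetLike.coe_ssubset_coe.2 ((PrimeSpectrum.asIdeal_lt_asIdeal P Q).2 hPQ))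
  have := Ideal.comap_lt_comap_of_integral_mem_sdiff (I := P.asIdeal) (J := Q.asIdeal) hPQ.le hx
    (Algebra.IsIntegral.isIntegral (R := A) x)
  exact this

theorem le_krull_of_integral (A B : Type*) [CommRing A] [CommRing B] [Algebra A B]
    [Algebra.IsIntegral A B] (hinj : Function.Injective (algebraMap A B)) :
    ringKrullDim A ≤ ringKrullDim B := by
  refine iSup_le fun l => ?_
  obtain ⟨Q, -, hQ, hQ2⟩ := Ideal.exists_ideal_over_prime_of_isIntegral (S := B) l.head.asIdeal ⊥
    (by rw [← RingHom.ker_eq_comap_bot, (RingHom.injective_iff_ker_eq_bot _).1 hinj]; exact bot_le)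
  haveI : Q.LiesOver l.head.asIdeal := ⟨hQ2.symm⟩
  obtain ⟨L, hL, -⟩ := Ideal.exists_ltSeries_of_hasGoingUp l Q
  rw [← hL]
  exact Order.LTSeries.length_le_krullDim L

theorem krull_quot {A B : Type*} [CommRing A] [CommRing B] (f : A →+* B) (hf : f.IsIntegral)
    (Q : Ideal B) : ringKrullDim (B ⧸ Q) = ringKrullDim (A ⧸ Q.comap f) := by
  letI := f.toAlgebra
  haveI : Algebra.IsIntegral A B := ⟨hf⟩
  letI : Algebra (A ⧸ Q.comap f) (B ⧸ Q) := (Ideal.quotientMap Q f le_rfl).toAlgebra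
  haveI : Algebra.IsIntegral (A ⧸ Q.comap f) (B ⧸ Q) := by
    constructor
    intro x
    obtain ⟨b, rfl⟩ := Ideal.Quotient.mk_surjective x
    obtain ⟨p, hp, hpb⟩ := hf b
    refine ⟨p.map (Ideal.Quotient.mk _), hp.map _, ?_⟩
    rw [Polynomial.eval₂_map]
    have : (algebraMap (A ⧸ Q.comap f) (B ⧸ Q)).comp (Ideal.Quotient.mk (Q.comap f)) =
        (Ideal.Quotient.mk Q).comp f := by
      ext a; rfl
    rw [this, ← Polynomial.hom_eval₂, hpb, map_zero]
  refine le_antisymm (krull_le_of_integral _ _) (le_krull_of_integral _ _ ?_)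
  exact Ideal.quotientMap_injective

theorem rank_eq {K T : Type*} [Field K] [CommRing T] {r d : ℕ}
    [Algebra (MvPolynomial (Fin r) K) T] [Algebra.IsIntegral (MvPolynomial (Fin r) K) T]
    (hinj : Function.Injective (algebraMap (MvPolynomial (Fin r) K) T))
    (hmin : ∀ Q ∈ minimalPrimes T, ringKrullDim (T ⧸ Q) = ((d + 1 : ℕ) : WithBot ℕ∞)) :
    r = d + 1 := by
  obtain ⟨Q, -, hQ, hQ2⟩ := Ideal.exists_ideal_over_prime_of_isIntegral (S := T)
    (⊥ : Ideal (MvPolynomial (Fin r) K)) ⊥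
    (by rw [← RingHom.ker_eq_comap_bot, (RingHom.injective_iff_ker_eq_bot _).1 hinj])
  obtain ⟨Q0, hQ0, hle⟩ := Ideal.exists_minimalPrimes_le (J := Q) (bot_le (a := Q))
  have h0 : Q0.comap (algebraMap (MvPolynomial (Fin r) K) T) = ⊥ := by
    rw [eq_bot_iff, ← hQ2]; exact Ideal.comap_mono hle
  have h1 := hmin Q0 hQ0
  rw [krull_quot (algebraMap (MvPolynomial (Fin r) K) T) Algebra.IsIntegral.isIntegral, h0,
    ringKrullDim_eq_of_ringEquiv (RingEquiv.quotientBot _),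
    MvPolynomial.ringKrullDim_of_isNoetherianRing, ringKrullDim_eq_zero_of_field, zero_add] at h1
  simp only [Nat.card_eq_fintype_card, Fintype.card_fin] at h1
  exact_mod_cast h1

theorem torsion_free {K T : Type*} [Field K] [CommRing T] [IsReduced T] {d : ℕ}
    [Algebra (MvPolynomial (Fin (d+1)) K) T] [Algebra.IsIntegral (MvPolynomial (Fin (d+1)) K) T]
    (hmin : ∀ Q ∈ minimalPrimes T, ringKrullDim (T ⧸ Q) = ((d + 1 : ℕ) : WithBot ℕ∞))
    (a : MvPolynomial (Fin (d+1)) K) (s : T) (h : a • s = 0) : a = 0 ∨ s = 0 := by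
  by_contra! hc
  obtain ⟨ha, hs⟩ := hc
  obtain ⟨Q, hQ, hsQ⟩ : ∃ Q ∈ minimalPrimes T, s ∉ Q := by
    by_contra! hall
    apply hs
    have h1 : s ∈ sInf (minimalPrimes T) := by
      rw [Submodule.mem_sInf]; exact hall
    have h2 := Ideal.sInf_minimalPrimes (I := (⊥ : Ideal T))
    rw [show (⊥ : Ideal T).minimalPrimes = minimalPrimes T from rfl] at h2
    rw [h2] at h1
    have h3 : IsNilpotent s := by
      rw [← mem_nilradical]; exact h1
    exact h3.eq_zero
  have hQp : Q.IsPrime := hQ.1.1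
  set f := algebraMap (MvPolynomial (Fin (d+1)) K) T
  have haQ : a ∈ Q.comap f := by
    rw [Algebra.smul_def] at h
    have : f a * s ∈ Q := by rw [h]; exact Q.zero_mem
    exact (hQp.mem_or_mem this).resolve_right hsQ
  have h1 := ringKrullDim_succ_le_of_surjective (Ideal.Quotient.mk (Q.comap f))
    Ideal.Quotient.mk_surjective (mem_nonZeroDivisors_of_ne_zero ha)
    (Ideal.Quotient.eq_zero_iff_mem.2 haQ)
  rw [← krull_quot f Algebra.IsIntegral.isIntegral Q, hmin Q hQ,
    MvPolynomial.ringKrullDim_of_isNoetherianRing, ringKrullDim_eq_zero_of_field, zero_add] at h1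
  simp only [Nat.card_eq_fintype_card, Fintype.card_fin] at h1
  have h2 : d + 1 + 1 ≤ d + 1 := by exact_mod_cast h1
  omega

end krull

section red

theorem reduced_finite {k S L : Type*} [Field k] [CommRing S] [Algebra k S] [IsReduced S] [Field L]
    [Algebra k L] [FiniteDimensional k L] [Algebra.IsSeparable k L] : IsReduced (S ⊗[k] L) := by
  classical
  constructor
  intro x hx
  let b := Module.finBasis k L
  let B := Algebra.TensorProduct.basis S b
  have hB : ∀ j, Algebra.trace S (S ⊗[k] L) ((1 ⊗ₜ[k] (b.traceDual j)) * x) = B.repr x j := by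
    intro j
    have : (Algebra.trace S (S ⊗[k] L)) ∘ₗ (LinearMap.mulLeft S (1 ⊗ₜ[k] (b.traceDual j))) =
        B.coord j := by
      refine B.ext fun i => ?_
      simp only [LinearMap.comp_apply, LinearMap.mulLeft_apply, B, Algebra.TensorProduct.basis_apply,
        Algebra.TensorProduct.tmul_mul_tmul, mul_one, Module.Basis.coord_apply]
      have h1 : Algebra.trace S (S ⊗[k] L) (1 ⊗ₜ[k] (b.traceDual j * b i)) =
          algebraMap k S (Algebra.trace k L (b.traceDual j * b i)) := by
        rw [Algebra.trace_apply, Algebra.trace_apply, ← LinearMap.trace_baseChange]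
        congr 1
        ext; simp
      rw [h1, Module.Basis.trace_traceDual_mul]
      rw [Algebra.TensorProduct.basis_repr_tmul]
      simp [Finsupp.single_apply]
    exact congrArg (fun f => f x) this
  refine B.repr.injective ?_
  ext j
  rw [← hB j, map_zero, Finsupp.zero_apply]
  refine IsNilpotent.eq_zero (Algebra.isNilpotent_trace_of_isNilpotent ?_)
  exact (Commute.all _ _).isNilpotent_mul_left hx

theorem reduced_baseChange {k S K : Type*} [Field k] [PerfectField k] [CommRing S] [Algebra k S]
    [IsReduced S] [Field K] [Algebra k K] [Algebra.IsAlgebraic k K] : IsReduced (K ⊗[k] S) := by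
  have h : IsReduced (S ⊗[k] K) := by
    refine IsReduced.tensorProduct_of_flat_of_forall_fg fun B hB => ?_
    haveI : Algebra.IsIntegral k B := ⟨fun x => by
      have : IsIntegral k (x : K) := Algebra.IsIntegral.isIntegral _
      exact (isIntegral_algHom_iff B.val Subtype.val_injective).1 this⟩
    letI : Field B := (isField_of_isIntegral_of_isField' (Field.toIsField k)).toField
    haveI : Algebra.FiniteType k B := (Subalgebra.fg_iff_finiteType B).1 hB
    haveI : Module.Finite k B := Algebra.IsIntegral.finite
    exact reduced_finite
  exact isReduced_of_injective (Algebra.TensorProduct.comm k K S) (Algebra.TensorProduct.comm k K S).injective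

end red
end HilbBound

end

section
open MvPolynomial
open scoped TensorProduct DirectSum

namespace HilbBound
set_option linter.style.haveILetI false
section quot
variable {k : Type*} [Field k] {n : ℕ} (I : Ideal (MvPolynomial (Fin (n+1)) k))

/-- graded pieces of the quotient -/
noncomputable abbrev qgr (m : ℕ) : Submodule k (MvPolynomial (Fin (n+1)) k ⧸ I) :=
  (homogeneousSubmodule (Fin (n+1)) k m).map (Ideal.Quotient.mkₐ k I).toLinearMap

theorem qgr_monoid : SetLike.GradedMonoid (qgr I) where
  one_mem := ⟨1, isHomogeneous_one _ _, by simp⟩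
  mul_mem := by
    rintro i j _ _ ⟨a, ha, rfl⟩ ⟨b, hb, rfl⟩
    exact ⟨a * b, IsHomogeneous.mul ha hb, by simp⟩

/-- map of one graded piece -/
noncomputable def qpiece (m : ℕ) : homogeneousSubmodule (Fin (n+1)) k m →ₗ[k] qgr I m :=
  (Ideal.Quotient.mkₐ k I).toLinearMap.submoduleMap _

noncomputable instance hdec : DirectSum.Decomposition (homogeneousSubmodule (Fin (n+1)) k) :=
  decomposition

/-- all components -/
noncomputable def qdec0 : MvPolynomial (Fin (n+1)) k →ₗ[k] ⨁ i, qgr I i :=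
  DirectSum.lmap (qpiece I) ∘ₗ (DirectSum.decomposeLinearEquiv (homogeneousSubmodule (Fin (n+1)) k)).toLinearMap

theorem qdec0_homog {m : ℕ} (a : homogeneousSubmodule (Fin (n+1)) k m) :
    qdec0 I a = DirectSum.lof k ℕ (fun i => qgr I i) m (qpiece I m a) := by
  simp [qdec0]

theorem coe_qdec0 (a : MvPolynomial (Fin (n+1)) k) :
    DirectSum.coeLinearMap (qgr I) (qdec0 I a) = Ideal.Quotient.mk I a := by
  have : DirectSum.coeLinearMap (qgr I) ∘ₗ DirectSum.lmap (qpiece I) =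
      (Ideal.Quotient.mkₐ k I).toLinearMap ∘ₗ DirectSum.coeLinearMap (homogeneousSubmodule (Fin (n+1)) k) := by
    ext i x : 2
    simp [qpiece]
  have h2 := congrArg (fun f => f (DirectSum.decomposeLinearEquiv (homogeneousSubmodule (Fin (n+1)) k) a)) this
  simp only [LinearMap.comp_apply] at h2
  simp only [qdec0, LinearMap.comp_apply, LinearEquiv.coe_coe]
  rw [h2]
  have h3 : DirectSum.coeLinearMap (homogeneousSubmodule (Fin (n+1)) k)
      (DirectSum.decomposeLinearEquiv (homogeneousSubmodule (Fin (n+1)) k) a) = a :=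
    (DirectSum.decomposeLinearEquiv (homogeneousSubmodule (Fin (n+1)) k)).symm_apply_apply a
  rw [h3]; rfl

theorem qdec0_ker (hI : IsHomogeneousIdeal I) (a : MvPolynomial (Fin (n+1)) k) (ha : a ∈ I) :
    qdec0 I a = 0 := by
  refine DFinsupp.ext fun i => ?_
  apply Subtype.ext
  have h1 : ((DirectSum.decompose (homogeneousSubmodule (Fin (n+1)) k) a i :
      homogeneousSubmodule (Fin (n+1)) k i) : MvPolynomial (Fin (n+1)) k) = homogeneousComponent i a :=
    decomposition.decompose'_apply a i
  have h2 : ((qdec0 I a i : qgr I i) : MvPolynomial (Fin (n+1)) k ⧸ I) =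
      Ideal.Quotient.mk I (homogeneousComponent i a) := by
    rw [← h1]; rfl
  rw [h2]
  exact Ideal.Quotient.eq_zero_iff_mem.2 (hI a ha i)

/-- decomposition map -/
noncomputable def qdec (hI : IsHomogeneousIdeal I) :
    (MvPolynomial (Fin (n+1)) k ⧸ I) →ₗ[k] ⨁ i, qgr I i where
  toFun := Quotient.lift (s := I.quotientRel) (fun a => qdec0 I a) (by
    intro a b hab
    have h1 : a - b ∈ I := (Submodule.quotientRel_def I).1 hab
    have h2 := qdec0_ker I hI _ h1
    rw [map_sub, sub_eq_zero] at h2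
    exact h2)
  map_add' := by
    intro x y
    obtain ⟨a, rfl⟩ := Ideal.Quotient.mk_surjective x
    obtain ⟨b, rfl⟩ := Ideal.Quotient.mk_surjective y
    exact map_add (qdec0 I) a b
  map_smul' := by
    intro c x
    obtain ⟨a, rfl⟩ := Ideal.Quotient.mk_surjective x
    exact map_smul (qdec0 I) c a

theorem qdec_mk (hI : IsHomogeneousIdeal I) (a : MvPolynomial (Fin (n+1)) k) :
    qdec I hI (Ideal.Quotient.mk I a) = qdec0 I a := rfl

theorem qdec_left (hI : IsHomogeneousIdeal I) :
    DirectSum.coeLinearMap (qgr I) ∘ₗ qdec I hI = .id := by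
  refine LinearMap.ext fun x => ?_
  obtain ⟨a, rfl⟩ := Ideal.Quotient.mk_surjective x
  rw [LinearMap.comp_apply, qdec_mk, coe_qdec0]; rfl

theorem qdec_right (hI : IsHomogeneousIdeal I) :
    qdec I hI ∘ₗ DirectSum.coeLinearMap (qgr I) = .id := by
  refine DirectSum.linearMap_ext _ fun i => LinearMap.ext fun x => ?_
  obtain ⟨_, a, ha, rfl⟩ := x
  simp only [LinearMap.comp_apply, DirectSum.coeLinearMap_lof]
  exact qdec0_homog I ⟨a, ha⟩

/-- grading of the quotient -/
noncomputable abbrev qgraded (hI : IsHomogeneousIdeal I) : GradedAlgebra (qgr I) :=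
  { qgr_monoid I with
    toDecomposition := DirectSum.Decomposition.ofLinearMap (qgr I)
      (qdec I hI) (qdec_left I hI) (qdec_right I hI) }

instance qgr_fin (m : ℕ) : FiniteDimensional k (qgr I m) := by
  have e1 : {f : Fin (n+1) →₀ ℕ | f.degree = m} =
      (((Finset.univ : Finset (Fin (n+1))).finsuppAntidiag m : Finset _) : Set (Fin (n+1) →₀ ℕ)) := by
    ext f
    simp [Finset.mem_finsuppAntidiag, Finsupp.degree_eq_sum]
  haveI : FiniteDimensional k (homogeneousSubmodule (Fin (n+1)) k m) := by
    apply FiniteDimensional.of_finrank_pos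
    rw [finrank_homog]
    exact Nat.choose_pos (by omega)
  infer_instance

end quot

section bc
variable {k S : Type*} (K : Type*) [Field k] [Field K] [Algebra k K] [CommRing S] [Algebra k S]
  (𝒮 : ℕ → Submodule k S) [GradedAlgebra 𝒮]

theorem finrank_bc (m : ℕ) :
    Module.finrank K ((𝒮 m).baseChange K) = Module.finrank k (𝒮 m) := by
  rw [← (LinearEquiv.ofBijective _ (DirectSum.toBaseChange_bijective (S := K) 𝒮 m)).finrank_eq,
    Module.finrank_baseChange]

theorem fin_bc (m : ℕ) [FiniteDimensional k (𝒮 m)] : FiniteDimensional K ((𝒮 m).baseChange K) :=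
  Module.Finite.equiv (LinearEquiv.ofBijective _ (DirectSum.toBaseChange_bijective (S := K) 𝒮 m))

theorem integral_bc [Algebra.IsAlgebraic k K] :
    (Algebra.TensorProduct.includeRight : S →ₐ[k] K ⊗[k] S).toRingHom.IsIntegral := by
  intro x
  induction x using TensorProduct.induction_on with
  | zero => exact RingHom.IsIntegralElem.of_mem_closure _ (RingHom.isIntegralElem_zero _) (RingHom.isIntegralElem_zero _) (Subring.zero_mem _)
  | tmul c s =>
    have : c ⊗ₜ[k] s = (c ⊗ₜ[k] (1:S)) * (1 ⊗ₜ[k] s) := by simp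
    rw [this]
    refine RingHom.IsIntegralElem.mul _ ?_ ?_
    · obtain ⟨p, hp, hpc⟩ := (Algebra.IsIntegral.isIntegral c : IsIntegral k c)
      refine ⟨p.map (algebraMap k S), hp.map _, ?_⟩
      rw [Polynomial.eval₂_map]
      have h1 : (Algebra.TensorProduct.includeRight : S →ₐ[k] K ⊗[k] S).toRingHom.comp (algebraMap k S)
          = (Algebra.TensorProduct.includeLeft : K →ₐ[k] K ⊗[k] S).toRingHom.comp (algebraMap k K) := by
        ext a
        exact ((Algebra.TensorProduct.includeRight : S →ₐ[k] K ⊗[k] S).commutes a).trans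
          ((Algebra.TensorProduct.includeLeft : K →ₐ[k] K ⊗[k] S).commutes a).symm
      rw [h1]
      have := Polynomial.hom_eval₂ p (algebraMap k K) (Algebra.TensorProduct.includeLeft : K →ₐ[k] K ⊗[k] S).toRingHom c
      rw [hpc, map_zero] at this
      exact this.symm
    · exact RingHom.isIntegralElem_map (Algebra.TensorProduct.includeRight : S →ₐ[k] K ⊗[k] S).toRingHom
  | add x y hx hy => exact RingHom.IsIntegralElem.add _ hx hy

theorem minimal_bc [Nontrivial S] (Q : Ideal (K ⊗[k] S)) (hQ : Q ∈ minimalPrimes (K ⊗[k] S)) :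
    Q.comap (Algebra.TensorProduct.includeRight : S →ₐ[k] K ⊗[k] S).toRingHom ∈ minimalPrimes S := by
  letI : Algebra S (K ⊗[k] S) := Algebra.TensorProduct.rightAlgebra
  let e : S ⊗[k] K ≃ₗ[S] K ⊗[k] S :=
    { TensorProduct.comm k S K with
      map_smul' := by
        intro a x
        change TensorProduct.comm k S K (a • x) = a • TensorProduct.comm k S K x
        induction x using TensorProduct.induction_on with
        | zero => simp
        | tmul b c =>
          rw [TensorProduct.smul_tmul', TensorProduct.comm_tmul, TensorProduct.comm_tmul,
            Algebra.smul_def]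
          change _ = (1 ⊗ₜ[k] a : K ⊗[k] S) * (c ⊗ₜ[k] b)
          simp
        | add x y hx hy => rw [smul_add, map_add, map_add, smul_add, hx, hy] }
  haveI : Module.Flat S (K ⊗[k] S) := Module.Flat.of_linearEquiv e.symm
  haveI : Q.IsPrime := hQ.1.1
  set P := Q.comap (algebraMap S (K ⊗[k] S)) with hP
  obtain ⟨P0, hP0, hle⟩ := Ideal.exists_minimalPrimes_le (J := P) (bot_le (a := P))
  rcases hle.eq_or_lt with h | h
  · rw [h] at hP0; exact hP0
  · exfalso
    haveI := hP0.1.1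
    haveI : Q.LiesOver P := ⟨hP⟩
    obtain ⟨Q0, hlt, hQ0, -⟩ := Ideal.exists_ideal_lt_liesOver_of_lt Q h
    exact not_le_of_gt hlt (hQ.2 ⟨hQ0, bot_le⟩ hlt.le)

end bc
end HilbBound

end

section
open MvPolynomial
open scoped TensorProduct DirectSum

namespace HilbBound
set_option linter.style.haveILetI false

theorem core {K T : Type*} [Field K] [Infinite K] [CommRing T] [Algebra K T] [IsReduced T]
    (𝒮 : ℕ → Submodule K T) [GradedAlgebra 𝒮] [∀ m, FiniteDimensional K (𝒮 m)] {N d : ℕ}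
    (x : Fin N → T) (hx : ∀ i, x i ∈ 𝒮 1) (hgen : Algebra.adjoin K (Set.range x) = ⊤)
    (hmin : ∀ Q ∈ minimalPrimes T, ringKrullDim (T ⧸ Q) = ((d + 1 : ℕ) : WithBot ℕ∞)) :
    ∃ ρ c : ℕ, (∀ m, Module.finrank K (𝒮 m) ≤ ρ * (m + d).choose d) ∧
      ∀ m, c ≤ m → ρ * (m - c + d).choose d ≤ Module.finrank K (𝒮 m) := by
  rcases subsingleton_or_nontrivial T with hT | hT
  · refine ⟨0, 0, fun m => ?_, fun m _ => by simp⟩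
    rw [Module.finrank_zero_of_subsingleton]; simp
  obtain ⟨r, y, hy, hinj, hIntegral⟩ := exists_noether 𝒮 x hx hgen
  letI : Algebra (MvPolynomial (Fin r) K) T := (aeval y : MvPolynomial (Fin r) K →ₐ[K] T).toRingHom.toAlgebra
  have hmap : ∀ F, algebraMap (MvPolynomial (Fin r) K) T F = aeval y F := fun _ => rfl
  haveI : IsScalarTower K (MvPolynomial (Fin r) K) T := by
    refine IsScalarTower.of_algebraMap_eq fun a => ?_
    rw [hmap, MvPolynomial.algebraMap_eq, ← MvPolynomial.algebraMap_eq, AlgHom.commutes]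
  haveI : Algebra.IsIntegral (MvPolynomial (Fin r) K) T := by
    constructor
    intro s
    have hs := hIntegral s
    have hr := Algebra.adjoin_range_eq_range_aeval K y
    rw [hr] at hs
    obtain ⟨p, hp, hps⟩ := hs
    let f : MvPolynomial (Fin r) K →+* (aeval y : MvPolynomial (Fin r) K →ₐ[K] T).range :=
      (aeval y : MvPolynomial (Fin r) K →ₐ[K] T).rangeRestrict.toRingHom
    have hf : Function.Surjective f := AlgHom.rangeRestrict_surjective _
    obtain ⟨q, hq, -, hqm⟩ := Polynomial.lifts_and_natDegree_eq_and_monic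
      (f := f) (p := p) (by
        rw [Polynomial.lifts_iff_coeff_lifts]
        intro i; exact hf _) hp
    refine ⟨q, hqm, ?_⟩
    rw [← hq, Polynomial.eval₂_map] at hps
    exact hps
  haveI : Algebra.FiniteType K T := ⟨⟨(Set.finite_range x).toFinset, by simpa using hgen⟩⟩
  haveI : Algebra.FiniteType (MvPolynomial (Fin r) K) T := Algebra.FiniteType.of_restrictScalars_finiteType K _ _
  haveI : Module.Finite (MvPolynomial (Fin r) K) T := Algebra.IsIntegral.finite
  have hrd : r = d + 1 := rank_eq hinj hmin
  subst hrd
  have hX : ∀ i, algebraMap (MvPolynomial (Fin (d+1)) K) T (X i) ∈ 𝒮 1 := by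
    intro i; rw [hmap, aeval_X]; exact hy i
  obtain ⟨ρ, e, ε, a, α, hli, he, ha, hα, hspan⟩ := exists_basis 𝒮 hX
  obtain ⟨c, hc⟩ := lower_bound 𝒮 hX e ε hli he
  exact ⟨ρ, c, upper_bound 𝒮 hX (torsion_free hmin) e ε a α hli he ha hα hspan, hc⟩

theorem core_quot {k : Type*} [Field k] [PerfectField k] {n d : ℕ}
    (I : Ideal (MvPolynomial (Fin (n+1)) k)) (hhom : IsHomogeneousIdeal I)
    (hrad : I.IsRadical) (hunm : IsUnmixed k I d) :
    ∃ ρ c : ℕ, (∀ m, hilbF k I m ≤ ρ * (m + d).choose d) ∧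
      ∀ m, c ≤ m → ρ * (m - c + d).choose d ≤ hilbF k I m := by
  let K := AlgebraicClosure k
  letI := qgraded I hhom
  haveI : IsReduced (MvPolynomial (Fin (n+1)) k ⧸ I) := (Ideal.isRadical_iff_quotient_reduced I).1 hrad
  rcases subsingleton_or_nontrivial (MvPolynomial (Fin (n+1)) k ⧸ I) with hT | hT
  · refine ⟨0, 0, fun m => ?_, fun m _ => by simp⟩
    unfold hilbF
    rw [Module.finrank_zero_of_subsingleton]; simp
  haveI : IsReduced (K ⊗[k] (MvPolynomial (Fin (n+1)) k ⧸ I)) := reduced_baseChange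
  let ι : (MvPolynomial (Fin (n+1)) k ⧸ I) →ₐ[k] K ⊗[k] (MvPolynomial (Fin (n+1)) k ⧸ I) :=
    Algebra.TensorProduct.includeRight
  let φ : MvPolynomial (Fin (n+1)) k →ₐ[k] K ⊗[k] (MvPolynomial (Fin (n+1)) k ⧸ I) :=
    ι.comp (Ideal.Quotient.mkₐ k I)
  let x : Fin (n+1) → K ⊗[k] (MvPolynomial (Fin (n+1)) k ⧸ I) := fun i => φ (X i)
  haveI := fun m => fin_bc K (qgr I) m
  obtain ⟨ρ, c, h1, h2⟩ := core (K := K) (T := K ⊗[k] (MvPolynomial (Fin (n+1)) k ⧸ I)) (d := d)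
    (fun i => (qgr I i).baseChange K) x
    (by
      intro i
      exact Submodule.tmul_mem_baseChange_of_mem _ ⟨X i, isHomogeneous_X _ _, rfl⟩)
    (by
      rw [eq_top_iff]
      rintro t -
      induction t using TensorProduct.induction_on with
      | zero => exact Subalgebra.zero_mem _
      | add a b ha hb => exact Subalgebra.add_mem _ ha hb
      | tmul a s =>
        obtain ⟨f, rfl⟩ := Ideal.Quotient.mk_surjective s
        have e1 : a ⊗ₜ[k] (Ideal.Quotient.mk I f) = a • φ f := by
          change _ = a • ((1 : K) ⊗ₜ[k] (Ideal.Quotient.mk I f))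
          rw [TensorProduct.smul_tmul', smul_eq_mul, mul_one]
        rw [e1]
        refine Subalgebra.smul_mem _ ?_ a
        have e2 : φ f ∈ Algebra.adjoin k (Set.range x) := by
          clear e1
          induction f using MvPolynomial.induction_on with
          | C a =>
            have : φ (C a) = algebraMap k _ a := φ.commutes a
            rw [this]
            exact Subalgebra.algebraMap_mem _ a
          | add p q hp hq => rw [map_add]; exact Subalgebra.add_mem _ hp hq
          | mul_X p i hp =>
            rw [map_mul]
            exact Subalgebra.mul_mem _ hp (Algebra.subset_adjoin ⟨i, rfl⟩)
        have e3 : Algebra.adjoin k (Set.range x) ≤ (Algebra.adjoin K (Set.range x)).restrictScalars k :=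
          Algebra.adjoin_le Algebra.subset_adjoin
        exact e3 e2)
    (by
      intro Q hQ
      rw [krull_quot _ (integral_bc K) Q,
        krull_quot (Ideal.Quotient.mk I)
          (RingHom.isIntegral_of_surjective _ Ideal.Quotient.mk_surjective)]
      refine hunm _ ?_
      have m1 := minimal_bc K Q hQ
      have m2 := Ideal.minimalPrimes_eq_comap (I := I) ▸ Set.mem_image_of_mem
        (Ideal.comap (Ideal.Quotient.mk I)) m1
      have m3 := Module.associatedPrimes.minimalPrimes_annihilator_subset_associatedPrimes
        (MvPolynomial (Fin (n+1)) k) (MvPolynomial (Fin (n+1)) k ⧸ I)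
      rw [Ideal.annihilator_quotient] at m3
      exact m3 m2)
  refine ⟨ρ, c, fun m => ?_, fun m hm => ?_⟩
  · have := h1 m
    rwa [finrank_bc K (qgr I) m] at this
  · have := h2 m hm
    rwa [finrank_bc K (qgr I) m] at this

theorem rho_le (P : Polynomial ℚ) (hP : P ≠ 0) (h : ℕ → ℕ)
    (hh : ∀ᶠ m : ℕ in Filter.atTop, (h m : ℚ) = P.eval (m : ℚ)) (ρ c : ℕ)
    (hl : ∀ m, c ≤ m → ρ * (m - c + P.natDegree).choose P.natDegree ≤ h m) :
    ρ ≤ ⌊(P.natDegree.factorial : ℚ) * P.leadingCoeff⌋₊ := by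
  set d := P.natDegree with hd
  let L : Polynomial ℚ := Polynomial.X + Polynomial.C (1 - (c : ℚ))
  let Q : Polynomial ℚ := (ascPochhammer ℚ d).comp L
  have hLm : L.Monic := Polynomial.monic_X_add_C _
  have hLd : L.natDegree = 1 := Polynomial.natDegree_X_add_C _
  have hQm : Q.Monic := (monic_ascPochhammer ℚ d).comp hLm (by rw [hLd]; exact one_ne_zero)
  have hQd : Q.natDegree = d := by
    rw [Polynomial.natDegree_comp, hLd, ascPochhammer_natDegree, mul_one]
  have hQe : ∀ m : ℕ, c ≤ m → Q.eval (m : ℚ) = (d.factorial * (m - c + d).choose d : ℕ) := by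
    intro m hm
    have e1 : L.eval (m : ℚ) = ((m - c + 1 : ℕ) : ℚ) := by
      simp only [L, Polynomial.eval_add, Polynomial.eval_X, Polynomial.eval_C]
      push_cast [Nat.cast_sub hm]; ring
    rw [Polynomial.eval_comp, e1, ← ascPochhammer_eval_cast, ascPochhammer_nat_eq_ascFactorial,
      Nat.ascFactorial_eq_factorial_mul_choose]
  have hdeg : P.degree = Q.degree := by
    rw [Polynomial.degree_eq_natDegree hP, Polynomial.degree_eq_natDegree hQm.ne_zero, hQd]
  have ht := (Polynomial.div_tendsto_atTop_leadingCoeff_div_of_degree_eq P Q hdeg).comp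
    (tendsto_natCast_atTop_atTop (R := ℚ))
  rw [hQm.leadingCoeff, div_one] at ht
  have key : (ρ : ℚ) / d.factorial ≤ P.leadingCoeff := by
    refine ge_of_tendsto ht ?_
    filter_upwards [hh, Filter.eventually_ge_atTop c] with m hm hc
    have h1 := hl m hc
    simp only [Function.comp]
    rw [← hm, hQe m hc]
    have hf : (0 : ℚ) < d.factorial := by exact_mod_cast d.factorial_pos
    have hch : (0 : ℚ) < (m - c + d).choose d := by
      exact_mod_cast Nat.choose_pos (Nat.le_add_left _ _)
    have h2 : (ρ : ℚ) * (m - c + d).choose d ≤ h m := by exact_mod_cast h1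
    rw [div_le_div_iff₀ hf (by push_cast; positivity)]
    push_cast
    nlinarith
  apply Nat.le_floor
  have hf : (0 : ℚ) < d.factorial := by exact_mod_cast d.factorial_pos
  rw [div_le_iff₀ hf] at key
  linarith

theorem choose_sum (D m d : ℕ) :
    D * (m + d).choose d + (m + d).choose (d + 1) ≤ (m + D + d).choose (d + 1) := by
  induction D with
  | zero => simp
  | succ D ih =>
    have e : m + (D + 1) + d = (m + D + d) + 1 := by omega
    rw [e, Nat.choose_succ_succ']
    have := Nat.choose_le_choose d (show m + d ≤ m + D + d by omega)
    rw [Nat.succ_mul]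
    omega

end HilbBound

end

/-- upper bound `h_I(m) ≤ C(m + deg I + d, d+1) − C(m + d, d+1)`
for a homogeneous unmixed radical ideal of projective dimension `d` over a
perfect field. -/
theorem hilbert_function_unmixed_radical_upper_bound {k : Type*} [Field k]
    [PerfectField k] {n d : ℕ}
    (I : Ideal (MvPolynomial (Fin (n+1)) k)) (hhom : IsHomogeneousIdeal I)
    (hrad : I.IsRadical) (hunm : IsUnmixed k I d) (hne : hilbP k I ≠ 0)
    (hdim : idealDim k I = d) :
    ∀ m : ℕ, 1 ≤ m →
      (hilbF k I m : ℤ) ≤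
        ichoose ((m : ℤ) + idealDeg k I + d) (d + 1) - ichoose ((m : ℤ) + d) (d + 1) := by
  intro m _
  obtain ⟨ρ, c, h1, h2⟩ := HilbBound.core_quot I hhom hrad hunm
  have hP : ∀ᶠ m : ℕ in Filter.atTop, (hilbF k I m : ℚ) = (hilbP k I).eval (m : ℚ) := by
    by_cases h : ∃ P : Polynomial ℚ, ∀ᶠ m : ℕ in Filter.atTop, (hilbF k I m : ℚ) = P.eval (m : ℚ)
    · have e : hilbP k I = h.choose := by unfold hilbP; rw [dif_pos h]
      rw [e]; exact h.choose_spec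
    · exact absurd (by unfold hilbP; rw [dif_neg h]) hne
  have hd : (hilbP k I).natDegree = d := hdim
  have hρ : ρ ≤ idealDeg k I :=
    HilbBound.rho_le (hilbP k I) hne (hilbF k I) hP ρ c (by rw [hd]; exact h2)
  have h3 := h1 m
  have h4 := Nat.mul_le_mul_right ((m + d).choose d) hρ
  have h5 := HilbBound.choose_sum (idealDeg k I) m d
  have e1 : ichoose ((m : ℤ) + idealDeg k I + d) (d + 1) =
      ((m + idealDeg k I + d).choose (d + 1) : ℕ) := by
    unfold ichoose
    rw [if_neg (by omega)]
    norm_cast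
  have e2 : ichoose ((m : ℤ) + d) (d + 1) = ((m + d).choose (d + 1) : ℕ) := by
    unfold ichoose
    rw [if_neg (by omega)]
    norm_cast
  rw [e1, e2]
  omega
end

section
/- Let k be a perfect field, I ⊆ k[x_0,...,x_n] a homogeneous unmixed radical ideal of projective dimension 0, and f a homogeneous polynomial that is a non zero divisor modulo I. Then h_{(I,f)}(m) ≤ deg I for all m ≥ 1, and h_{(I,f)}(m) = 0 for all m ≥ deg I + deg f − 1. -/
open MvPolynomial

section HilbAux

/-- The degree `m` part of an ideal. -/
noncomputable def degPart {k : Type*} [Field k] {n : ℕ}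
    (I : Ideal (MvPolynomial (Fin (n+1)) k)) (m : ℕ) :
    Submodule k (MvPolynomial (Fin (n+1)) k) :=
  homogeneousSubmodule (Fin (n+1)) k m ⊓ I.restrictScalars k

theorem mem_degPart {k : Type*} [Field k] {n : ℕ}
    (I : Ideal (MvPolynomial (Fin (n+1)) k)) (m : ℕ) (p : MvPolynomial (Fin (n+1)) k) :
    p ∈ degPart I m ↔ p.IsHomogeneous m ∧ p ∈ I := by
  simp [degPart]

theorem finDim_hom {k : Type*} [Field k] {n : ℕ} (m : ℕ) :
    FiniteDimensional k (homogeneousSubmodule (Fin (n+1)) k m) :=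
  Module.Finite.iff_fg.mpr (homogeneousSubmodule_fg _ _ m)

theorem finDim_degPart {k : Type*} [Field k] {n : ℕ}
    (I : Ideal (MvPolynomial (Fin (n+1)) k)) (m : ℕ) :
    FiniteDimensional k (degPart I m) := by
  have := finDim_hom (k := k) (n := n) m
  exact Submodule.finiteDimensional_of_le (inf_le_left : degPart I m ≤ homogeneousSubmodule _ _ m)

theorem finrank_map_inj_aux {k V W : Type*} [Field k] [AddCommGroup V] [Module k V]
    [AddCommGroup W] [Module k W] {p : Submodule k V} (L : V →ₗ[k] W)
    (h : Function.Injective L) : Module.finrank k (p.map L) = Module.finrank k p :=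
  ((Submodule.equivMapOfInjective L h p).finrank_eq).symm

theorem hilbF_add {k : Type*} [Field k] {n : ℕ}
    (I : Ideal (MvPolynomial (Fin (n+1)) k)) (m : ℕ) :
    hilbF k I m + Module.finrank k (degPart I m) =
      Module.finrank k (homogeneousSubmodule (Fin (n+1)) k m) := by
  have := finDim_hom (k := k) (n := n) m
  have h := LinearMap.finrank_range_add_finrank_ker
    ((Ideal.Quotient.mkₐ k I).toLinearMap.domRestrict (homogeneousSubmodule (Fin (n+1)) k m))
  rw [← h]
  congr 1
  · unfold hilbF
    rw [LinearMap.range_domRestrict]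
  · have : degPart I m = (LinearMap.ker ((Ideal.Quotient.mkₐ k I).toLinearMap.domRestrict
        (homogeneousSubmodule (Fin (n+1)) k m))).map (Submodule.subtype _) := by
      ext p
      simp [mem_degPart, Ideal.Quotient.eq_zero_iff_mem, and_comm]
    rw [this]
    exact finrank_map_inj_aux _ (Submodule.injective_subtype _)

theorem hilbF_anti {k : Type*} [Field k] {n : ℕ}
    {I J : Ideal (MvPolynomial (Fin (n+1)) k)} (h : I ≤ J) (m : ℕ) :
    hilbF k J m ≤ hilbF k I m := by
  have h1 := hilbF_add I m
  have h2 := hilbF_add J m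
  have := finDim_degPart J m
  have h3 : Module.finrank k (degPart I m) ≤ Module.finrank k (degPart J m) :=
    Submodule.finrank_mono (inf_le_inf_left _ h)
  omega

theorem hilbF_eq_zero_iff {k : Type*} [Field k] {n : ℕ}
    (I : Ideal (MvPolynomial (Fin (n+1)) k)) (m : ℕ) :
    hilbF k I m = 0 ↔ ∀ p : MvPolynomial (Fin (n+1)) k, p.IsHomogeneous m → p ∈ I := by
  have h1 := hilbF_add I m
  have := finDim_hom (k := k) (n := n) m
  constructor
  · intro h p hp
    have : degPart I m = homogeneousSubmodule (Fin (n+1)) k m :=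
      Submodule.eq_of_le_of_finrank_eq inf_le_left (by omega)
    have hp' : p ∈ degPart I m := by rw [this]; exact hp
    exact ((mem_degPart _ _ _).1 hp').2
  · intro h
    have : degPart I m = homogeneousSubmodule (Fin (n+1)) k m := by
      ext p
      simp only [mem_degPart, mem_homogeneousSubmodule]
      exact ⟨fun h => h.1, fun hp => ⟨hp, h p hp⟩⟩
    rw [this] at h1
    omega

theorem hilbF_zero_succ {k : Type*} [Field k] {n : ℕ}
    (I : Ideal (MvPolynomial (Fin (n+1)) k)) (m : ℕ) (h : hilbF k I m = 0) :
    hilbF k I (m+1) = 0 := by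
  rw [hilbF_eq_zero_iff] at h ⊢
  intro p hp
  rw [p.as_sum]
  refine Ideal.sum_mem _ fun d hd => ?_
  have hdeg : d.degree = m + 1 := by
    by_contra hne
    exact (mem_support_iff.1 hd) (hp.coeff_eq_zero hne)
  have : d ≠ 0 := by
    rintro rfl
    simp at hdeg
  obtain ⟨i, hi⟩ := Finsupp.ne_iff.1 this
  have hle : Finsupp.single i 1 ≤ d := by
    rw [Finsupp.single_le_iff]
    exact Nat.one_le_iff_ne_zero.2 hi
  have hsum : (d - Finsupp.single i 1) + Finsupp.single i 1 = d := tsub_add_cancel_of_le hle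
  have hd' : (d - Finsupp.single i 1).degree = m := by
    have := congrArg Finsupp.degree hsum
    rw [map_add, Finsupp.degree_single, hdeg] at this
    omega
  have : monomial d (coeff d p) = monomial (d - Finsupp.single i 1) (coeff d p) * X i := by
    rw [X, monomial_mul, hsum, mul_one]
  rw [this]
  exact Ideal.mul_mem_right _ _ (h _ (isHomogeneous_monomial _ hd'))

theorem homComp_mul {k : Type*} [Field k] {n e : ℕ} {f : MvPolynomial (Fin (n+1)) k}
    (hf : f.IsHomogeneous e) (q : MvPolynomial (Fin (n+1)) k) (m : ℕ) :
    homogeneousComponent (m + e) (f * q) = f * homogeneousComponent m q := by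
  conv_lhs => rw [← sum_homogeneousComponent q, Finset.mul_sum, map_sum]
  have : ∀ i, homogeneousComponent (m + e) (f * homogeneousComponent i q) =
      if i = m then f * homogeneousComponent i q else 0 := by
    intro i
    have h1 : (f * homogeneousComponent i q) ∈ homogeneousSubmodule (Fin (n+1)) k (e + i) :=
      hf.mul (homogeneousComponent_isHomogeneous i q)
    rw [homogeneousComponent_of_mem h1]
    congr 1
    apply propext
    omega
  simp only [this, Finset.sum_ite_eq', Finset.mem_range]
  split_ifs with h
  · rfl
  · rw [homogeneousComponent_eq_zero _ _ (by omega), mul_zero]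

theorem hilbF_section {k : Type*} [Field k] {n e : ℕ}
    (I : Ideal (MvPolynomial (Fin (n+1)) k)) (hhom : IsHomogeneousIdeal I)
    (f : MvPolynomial (Fin (n+1)) k) (hf : f.IsHomogeneous e) (hf0 : f ≠ 0)
    (hreg : ∀ g, f * g ∈ I → g ∈ I) (m : ℕ) :
    hilbF k (I ⊔ Ideal.span {f}) (m + e) + hilbF k I m = hilbF k I (m + e) := by
  have h1 := hilbF_add I m
  have h2 := hilbF_add I (m + e)
  have h3 := hilbF_add (I ⊔ Ideal.span {f}) (m + e)
  have i1 := finDim_hom (k := k) (n := n) m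
  have i2 := finDim_hom (k := k) (n := n) (m + e)
  have i3 := finDim_degPart I (m + e)
  set L := LinearMap.mulLeft k f with hL
  have hinj : Function.Injective L := by
    intro a b hab
    exact mul_left_cancel₀ hf0 hab
  have e1 : degPart (I ⊔ Ideal.span {f}) (m + e) =
      degPart I (m + e) ⊔ (homogeneousSubmodule (Fin (n+1)) k m).map L := by
    ext p
    rw [mem_degPart]
    constructor
    · rintro ⟨hp, hpI⟩
      rw [Submodule.mem_sup]
      obtain ⟨a, ha, b, hb, rfl⟩ := Submodule.mem_sup.1 hpI
      obtain ⟨q, rfl⟩ := Ideal.mem_span_singleton'.1 hb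
      refine ⟨homogeneousComponent (m + e) a, ?_, f * homogeneousComponent m q, ?_, ?_⟩
      · rw [mem_degPart]
        exact ⟨homogeneousComponent_isHomogeneous _ _, hhom a ha _⟩
      · exact ⟨_, homogeneousComponent_isHomogeneous m q, rfl⟩
      · rw [← homComp_mul hf, ← map_add, mul_comm f q]
        exact homogeneousComponent_eq_self hp
    · intro hp
      obtain ⟨a, ha, b, ⟨q, hq, rfl⟩, rfl⟩ := Submodule.mem_sup.1 hp
      rw [mem_degPart] at ha
      have hq' : q.IsHomogeneous m := hq
      refine ⟨ha.1.add ?_, Ideal.add_mem _ (Ideal.mem_sup_left ha.2) (Ideal.mem_sup_right ?_)⟩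
      · have := hf.mul hq'
        rw [add_comm e m] at this
        exact this
      · exact Ideal.mul_mem_right _ _ (Ideal.mem_span_singleton_self f)
  have e2 : degPart I (m + e) ⊓ (homogeneousSubmodule (Fin (n+1)) k m).map L =
      (degPart I m).map L := by
    ext p
    rw [Submodule.mem_inf, mem_degPart]
    constructor
    · rintro ⟨⟨_, hp⟩, q, hq, rfl⟩
      exact ⟨q, (mem_degPart _ _ _).2 ⟨hq, hreg q hp⟩, rfl⟩
    · rintro ⟨q, hq, rfl⟩
      have hq' := (mem_degPart _ _ _).1 hq
      refine ⟨⟨?_, Ideal.mul_mem_left _ _ hq'.2⟩, q, hq'.1, rfl⟩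
      have := hf.mul hq'.1
      rw [add_comm e m] at this
      exact this
  have h4 := Submodule.finrank_sup_add_finrank_inf_eq (degPart I (m + e))
    ((homogeneousSubmodule (Fin (n+1)) k m).map L)
  rw [← e1, e2, finrank_map_inj_aux _ hinj,
    finrank_map_inj_aux _ hinj] at h4
  omega

/-- Apply a functional to the coefficients. -/
noncomputable def coeffApply {k K : Type*} [Field k] [Field K] [Algebra k K] {n : ℕ}
    (φ : K →ₗ[k] k) (p : MvPolynomial (Fin (n+1)) K) : MvPolynomial (Fin (n+1)) k :=
  ∑ d ∈ p.support, monomial d (φ (coeff d p))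

section BaseChange

variable {k K : Type*} [Field k] [Field K] [Algebra k K] {n : ℕ}

theorem coeff_coeffApply (φ : K →ₗ[k] k) (p : MvPolynomial (Fin (n+1)) K) (d) :
    coeff d (coeffApply φ p) = φ (coeff d p) := by
  classical
  simp only [coeffApply, coeff_sum, coeff_monomial, Finset.sum_ite_eq']
  split_ifs with h
  · rfl
  · rw [notMem_support_iff.1 h, map_zero]

theorem coeffApply_add (φ : K →ₗ[k] k) (p q : MvPolynomial (Fin (n+1)) K) :
    coeffApply φ (p + q) = coeffApply φ p + coeffApply φ q := by
  ext d
  simp [coeff_coeffApply]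

theorem coeffApply_zero (φ : K →ₗ[k] k) :
    coeffApply φ (0 : MvPolynomial (Fin (n+1)) K) = 0 := by
  ext d
  simp [coeff_coeffApply]

theorem coeffApply_sum {ι : Type*} (s : Finset ι) (φ : K →ₗ[k] k)
    (p : ι → MvPolynomial (Fin (n+1)) K) :
    coeffApply φ (∑ i ∈ s, p i) = ∑ i ∈ s, coeffApply φ (p i) := by
  ext d
  simp [coeff_coeffApply, coeff_sum]

theorem coeffApply_mul (φ : K →ₗ[k] k) (g : MvPolynomial (Fin (n+1)) k)
    (q : MvPolynomial (Fin (n+1)) K) :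
    coeffApply φ (map (algebraMap k K) g * q) = g * coeffApply φ q := by
  classical
  ext d
  simp only [coeff_coeffApply, coeff_mul, map_sum, coeff_map]
  refine Finset.sum_congr rfl fun x _ => ?_
  rw [← Algebra.smul_def, map_smul, smul_eq_mul]

theorem coeffApply_smul_map (φ : K →ₗ[k] k) (g : MvPolynomial (Fin (n+1)) k) (c : K) :
    coeffApply φ (c • map (algebraMap k K) g) = φ c • g := by
  ext d
  simp only [coeff_coeffApply, coeff_smul, coeff_map, smul_eq_mul]
  rw [mul_comm, ← Algebra.smul_def, map_smul, smul_eq_mul, mul_comm]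

theorem coeffApply_homComp (φ : K →ₗ[k] k) (q : MvPolynomial (Fin (n+1)) K) (m : ℕ) :
    coeffApply φ (homogeneousComponent m q) = homogeneousComponent m (coeffApply φ q) := by
  ext d
  simp only [coeff_coeffApply, coeff_homogeneousComponent]
  split_ifs <;> simp

theorem coeffApply_hom (φ : K →ₗ[k] k) {q : MvPolynomial (Fin (n+1)) K} {m : ℕ}
    (hq : q.IsHomogeneous m) : (coeffApply φ q).IsHomogeneous m := by
  rw [← homogeneousComponent_eq_self hq, coeffApply_homComp]
  exact homogeneousComponent_isHomogeneous _ _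

theorem exists_expand (q : MvPolynomial (Fin (n+1)) K) :
    ∃ (s : Finset (Module.Basis.ofVectorSpaceIndex k K)),
      q = ∑ j ∈ s, (Module.Basis.ofVectorSpace k K j) •
        map (algebraMap k K) (coeffApply ((Module.Basis.ofVectorSpace k K).coord j) q) := by
  classical
  set b := Module.Basis.ofVectorSpace k K
  refine ⟨q.support.biUnion fun d => (b.repr (coeff d q)).support, ?_⟩
  ext d
  simp only [coeff_sum, coeff_smul, coeff_map, coeff_coeffApply, smul_eq_mul]
  by_cases hd : d ∈ q.support
  · conv_lhs => rw [← b.linearCombination_repr (coeff d q), Finsupp.linearCombination_apply,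
      Finsupp.sum]
    rw [Finset.sum_subset (Finset.subset_biUnion_of_mem
      (fun d => (b.repr (coeff d q)).support) hd)]
    · refine Finset.sum_congr rfl fun j _ => ?_
      rw [Algebra.smul_def, mul_comm]
      rfl
    · intro j _ hj
      rw [Finsupp.notMem_support_iff.1 hj, zero_smul]
  · rw [notMem_support_iff.1 hd]
    simp

theorem mem_map_iff (I : Ideal (MvPolynomial (Fin (n+1)) k))
    (q : MvPolynomial (Fin (n+1)) K) :
    q ∈ I.map (map (algebraMap k K)) ↔ ∀ φ : K →ₗ[k] k, coeffApply φ q ∈ I := by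
  constructor
  · intro hq φ
    induction hq using Submodule.span_induction generalizing φ with
    | mem x hx =>
      obtain ⟨g, hg, rfl⟩ := hx
      have := coeffApply_smul_map φ g 1
      rw [one_smul] at this
      erw [this]
      rw [smul_eq_C_mul]
      exact Ideal.mul_mem_left _ _ hg
    | zero => rw [coeffApply_zero]; exact I.zero_mem
    | add x y _ _ hx hy => rw [coeffApply_add]; exact I.add_mem (hx φ) (hy φ)
    | smul a x _ hx =>
      obtain ⟨s, hs⟩ := exists_expand (k := k) a
      rw [smul_eq_mul, hs, Finset.sum_mul, coeffApply_sum]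
      refine Ideal.sum_mem _ fun j _ => ?_
      set c := Module.Basis.ofVectorSpace k K j
      have : ∀ g : MvPolynomial (Fin (n+1)) k, coeffApply φ (c • map (algebraMap k K) g * x) =
          g * coeffApply (φ ∘ₗ LinearMap.mulLeft k c) x := by
        intro g
        rw [smul_mul_assoc, ← coeffApply_mul]
        ext d
        simp [coeff_coeffApply]
      rw [this]
      exact Ideal.mul_mem_left _ _ (hx _)
  · intro h
    obtain ⟨s, hs⟩ := exists_expand (k := k) q
    rw [hs]
    refine Ideal.sum_mem _ fun j _ => ?_
    rw [smul_eq_C_mul]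
    exact Ideal.mul_mem_left _ _ (Ideal.mem_map_of_mem _ (h _))

theorem finrank_degPart_map (I : Ideal (MvPolynomial (Fin (n+1)) k)) (m : ℕ) :
    Module.finrank K (degPart (I.map (map (algebraMap k K))) m) =
      Module.finrank k (degPart I m) := by
  have := finDim_degPart I m
  set b := Module.finBasis k (degPart I m)
  let v : Fin (Module.finrank k (degPart I m)) → MvPolynomial (Fin (n+1)) K :=
    fun i => map (algebraMap k K) (b i : MvPolynomial (Fin (n+1)) k)
  have hv : LinearIndependent K v := by
    rw [Fintype.linearIndependent_iff]
    intro c hc i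
    rw [← Module.forall_dual_apply_eq_zero_iff k]
    intro φ
    have h1 := congrArg (coeffApply φ) hc
    rw [coeffApply_sum, coeffApply_zero] at h1
    simp only [v, coeffApply_smul_map] at h1
    have hb := b.linearIndependent
    rw [Fintype.linearIndependent_iff] at hb
    refine hb (fun i => φ (c i)) ?_ i
    apply Subtype.ext
    simpa using h1
  have hspan : degPart (I.map (map (algebraMap k K))) m = Submodule.span K (Set.range v) := by
    apply le_antisymm
    · intro q hq
      rw [mem_degPart, mem_map_iff] at hq
      obtain ⟨s, hs⟩ := exists_expand (k := k) q
      rw [hs]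
      refine Submodule.sum_mem _ fun j _ => Submodule.smul_mem _ _ ?_
      set g := coeffApply ((Module.Basis.ofVectorSpace k K).coord j) q with hg
      have hgm : g ∈ degPart I m :=
        (mem_degPart _ _ _).2 ⟨coeffApply_hom _ hq.1, hq.2 _⟩
      have h2 := b.sum_repr ⟨g, hgm⟩
      have h3 := congrArg Subtype.val h2
      simp only [Submodule.coe_sum, Submodule.coe_smul] at h3
      rw [← h3, map_sum]
      refine Submodule.sum_mem _ fun i _ => ?_
      rw [smul_eq_C_mul, map_mul, map_C, ← smul_eq_C_mul]
      exact Submodule.smul_mem _ _ (Submodule.subset_span ⟨i, rfl⟩)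
    · rw [Submodule.span_le]
      rintro _ ⟨i, rfl⟩
      have := (mem_degPart _ _ _).1 (b i).2
      exact (mem_degPart _ _ _).2 ⟨this.1.map _, Ideal.mem_map_of_mem _ this.2⟩
  rw [hspan, finrank_span_eq_card hv, Fintype.card_fin]

theorem hilbF_map (I : Ideal (MvPolynomial (Fin (n+1)) k)) (m : ℕ) :
    hilbF K (I.map (map (algebraMap k K))) m = hilbF k I m := by
  have h1 := hilbF_add I m
  have h2 := hilbF_add (I.map (map (algebraMap k K))) m
  have h3 := finrank_degPart_map (K := K) I m
  have h4 := finrank_degPart_map (K := K) (⊤ : Ideal (MvPolynomial (Fin (n+1)) k)) m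
  rw [Ideal.map_top] at h4
  have h5 : ∀ (F : Type _) [Field F], degPart (⊤ : Ideal (MvPolynomial (Fin (n+1)) F)) m =
      homogeneousSubmodule (Fin (n+1)) F m := by
    intro F _
    ext p
    simp [mem_degPart]
  have h6 : degPart (⊤ : Ideal (MvPolynomial (Fin (n+1)) k)) m =
      homogeneousSubmodule (Fin (n+1)) k m := by
    ext p
    simp [mem_degPart]
  rw [h5, h6] at h4
  omega

end BaseChange

theorem exists_linear {K : Type*} [Field K] [Infinite K] {n e : ℕ} (he : e ≠ 0)
    (J : Ideal (MvPolynomial (Fin (n+1)) K)) (hJ : J ≠ ⊤)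
    (f : MvPolynomial (Fin (n+1)) K) (hf : f.IsHomogeneous e)
    (hreg : ∀ g, f * g ∈ J → g ∈ J) :
    ∃ l : MvPolynomial (Fin (n+1)) K, l.IsHomogeneous 1 ∧ l ≠ 0 ∧ ∀ g, l * g ∈ J → g ∈ J := by
  let R := MvPolynomial (Fin (n+1)) K
  have hequiv : ∀ l : R, (∀ g, l * g ∈ J → g ∈ J) ↔ IsSMulRegular (R ⧸ J) l := by
    intro l
    rw [isSMulRegular_iff_right_eq_zero_of_smul]
    constructor
    · intro h x hx
      obtain ⟨x, rfl⟩ := Ideal.Quotient.mk_surjective x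
      rw [Ideal.Quotient.eq_zero_iff_mem]
      apply h
      rw [← Ideal.Quotient.eq_zero_iff_mem]
      exact hx
    · intro h g hg
      rw [← Ideal.Quotient.eq_zero_iff_mem]
      apply h
      rw [← Ideal.Quotient.eq_zero_iff_mem] at hg
      exact hg
  have hU := biUnion_associatedPrimes_eq_compl_regular R (R ⧸ J)
  have hfin := associatedPrimes.finite R (R ⧸ J)
  by_contra hcon
  push Not at hcon
  let S1 := homogeneousSubmodule (Fin (n+1)) K 1
  let g : Ideal R → Submodule K S1 := fun P => (P.restrictScalars K).comap S1.subtype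
  classical
  let s : Finset (Submodule K S1) := hfin.toFinset.image g
  have hcover : ⋃ p ∈ s, (p : Set S1) = Set.univ := by
    rw [Set.eq_univ_iff_forall]
    rintro ⟨l, hl⟩
    have : l ∈ ⋃ P ∈ associatedPrimes R (R ⧸ J), (P : Set R) := by
      rw [hU]
      intro hreg'
      have hreg'' : IsSMulRegular (R ⧸ J) l := hreg'
      rw [← hequiv] at hreg''
      have hl0 : l ≠ 0 := by
        rintro rfl
        apply hJ
        rw [Ideal.eq_top_iff_one]
        apply hreg''
        simp
      obtain ⟨x, hx, hx'⟩ := hcon l hl hl0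
      exact hx' (hreg'' x hx)
    simp only [Set.mem_iUnion] at this ⊢
    obtain ⟨P, hP, hlP⟩ := this
    exact ⟨g P, Finset.mem_image_of_mem _ (hfin.mem_toFinset.2 hP), hlP⟩
  have htop : ⊤ ∈ s := by
    by_contra h
    exact Subspace.biUnion_ne_univ_of_top_notMem h hcover
  obtain ⟨P, hP, hPt⟩ := Finset.mem_image.1 htop
  rw [hfin.mem_toFinset] at hP
  have hX : ∀ i, (X i : R) ∈ P := by
    intro i
    have : (⟨X i, isHomogeneous_X K i⟩ : S1) ∈ g P := by rw [hPt]; trivial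
    exact this
  have hfP : f ∈ P := by
    rw [f.as_sum]
    refine Ideal.sum_mem _ fun d hd => ?_
    have hdeg : d.degree = e := by
      by_contra hne
      exact (mem_support_iff.1 hd) (hf.coeff_eq_zero hne)
    have : d ≠ 0 := by
      rintro rfl
      simp at hdeg
      omega
    obtain ⟨i, hi⟩ := Finsupp.ne_iff.1 this
    have hle : Finsupp.single i 1 ≤ d := by
      rw [Finsupp.single_le_iff]
      exact Nat.one_le_iff_ne_zero.2 hi
    have hsum : (d - Finsupp.single i 1) + Finsupp.single i 1 = d := tsub_add_cancel_of_le hle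
    have : monomial d (coeff d f) = monomial (d - Finsupp.single i 1) (coeff d f) * X i := by
      rw [X, monomial_mul, hsum, mul_one]
    rw [this]
    exact Ideal.mul_mem_left _ _ (hX i)
  have : f ∈ ⋃ P ∈ associatedPrimes R (R ⧸ J), (P : Set R) := by
    simp only [Set.mem_iUnion]
    exact ⟨P, hP, hfP⟩
  rw [hU] at this
  exact this ((hequiv f).1 hreg)

theorem numeric (h g : ℕ → ℕ) (D M : ℕ) (h0 : 1 ≤ h 0) (hM : ∀ m, M ≤ m → h m = D)
    (hg : ∀ m, g (m+1) + h m = h (m+1)) (hz : ∀ m, g m = 0 → g (m+1) = 0) :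
    (∀ m, h m ≤ D) ∧ ∀ m, D - 1 ≤ m → h m = D := by
  have hmono : Monotone h := monotone_nat_of_le_succ fun m => by have := hg m; omega
  have hle : ∀ m, h m ≤ D := fun m => by
    rw [← hM (max m M) (le_max_right _ _)]
    exact hmono (le_max_left _ _)
  have hstab : ∀ m, g (m+1) = 0 → h m = D := by
    intro m hm
    have hg0 : ∀ j, g (m + 1 + j) = 0 := by
      intro j
      induction j with
      | zero => exact hm
      | succ j ih => exact hz _ ih
    have hc : ∀ j, h (m + j) = h m := by
      intro j
      induction j with
      | zero => rfl
      | succ j ih =>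
        have h1 := hg (m + j)
        have h2 := hg0 j
        rw [show m + 1 + j = m + j + 1 by ring] at h2
        rw [show m + (j + 1) = m + j + 1 by ring]
        omega
    rw [← hc M]
    exact hM _ (by omega)
  have hmin : ∀ m, min (m+1) D ≤ h m := by
    intro m
    induction m with
    | zero => omega
    | succ m ih =>
      have h1 := hg m
      by_cases hgm : g (m+1) = 0
      · have := hstab m hgm
        omega
      · omega
  refine ⟨hle, fun m hm => ?_⟩
  have h1 := hmin m
  have h2 := hle m
  omega

theorem idealDeg_spec {k : Type*} [Field k] {n : ℕ}
    (I : Ideal (MvPolynomial (Fin (n+1)) k)) (hne : hilbP k I ≠ 0) (hdim : idealDim k I = 0) :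
    1 ≤ idealDeg k I ∧ ∃ M, ∀ m, M ≤ m → hilbF k I m = idealDeg k I := by
  have hev : ∀ᶠ m : ℕ in Filter.atTop, (hilbF k I m : ℚ) = (hilbP k I).eval (m : ℚ) := by
    by_cases h : ∃ P : Polynomial ℚ, ∀ᶠ m : ℕ in Filter.atTop,
      (hilbF k I m : ℚ) = P.eval (m : ℚ)
    · have : hilbP k I = h.choose := by simp only [hilbP, dif_pos h]
      rw [this]
      exact h.choose_spec
    · exact absurd (by simp only [hilbP, dif_neg h]) hne
  have hnd : (hilbP k I).natDegree = 0 := hdim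
  obtain ⟨c, hc⟩ := Polynomial.natDegree_eq_zero.1 hnd
  have hc0 : c ≠ 0 := by
    rintro rfl
    exact hne (by rw [← hc, map_zero])
  have hdeg : idealDeg k I = ⌊c⌋₊ := by
    unfold idealDeg
    rw [hnd, ← hc]
    simp
  obtain ⟨M, hM⟩ := Filter.eventually_atTop.1 hev
  have hM' : ∀ m, M ≤ m → hilbF k I m = idealDeg k I := by
    intro m hm
    have := hM m hm
    rw [← hc, Polynomial.eval_C] at this
    rw [hdeg, ← this, Nat.floor_natCast]
  refine ⟨?_, M, hM'⟩
  have h1 := hM M le_rfl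
  rw [← hc, Polynomial.eval_C, hM' M le_rfl] at h1
  rw [Nat.one_le_iff_ne_zero]
  intro h
  rw [h] at h1
  exact hc0 (by simpa using h1.symm)

theorem hilbF_dim_zero {k : Type*} [Field k] {n e D M : ℕ} (he : e ≠ 0)
    (I : Ideal (MvPolynomial (Fin (n+1)) k)) (hhom : IsHomogeneousIdeal I)
    (hD : 1 ≤ D) (hM : ∀ m, M ≤ m → hilbF k I m = D)
    (f : MvPolynomial (Fin (n+1)) k) (hf : f.IsHomogeneous e)
    (hreg : ∀ g, f * g ∈ I → g ∈ I) :
    (∀ m, hilbF k I m ≤ D) ∧ ∀ m, D - 1 ≤ m → hilbF k I m = D := by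
  let K := AlgebraicClosure k
  let J := I.map (map (algebraMap k K))
  have hJF : ∀ m, hilbF K J m = hilbF k I m := hilbF_map I
  have h0 : 1 ≤ hilbF K J 0 := by
    rw [Nat.one_le_iff_ne_zero]
    intro h
    have : ∀ m, hilbF K J m = 0 := by
      intro m
      induction m with
      | zero => exact h
      | succ m ih => exact hilbF_zero_succ _ _ ih
    have h1 := this M
    rw [hJF, hM M le_rfl] at h1
    omega
  have hJ : J ≠ ⊤ := by
    intro h
    have : hilbF K J 0 = 0 := (hilbF_eq_zero_iff _ _).2 fun p _ => by rw [h]; trivial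
    omega
  have hJhom : IsHomogeneousIdeal J := by
    intro p hp m
    rw [mem_map_iff] at hp ⊢
    intro φ
    rw [coeffApply_homComp]
    exact hhom _ (hp φ) m
  have hJreg : ∀ g, map (algebraMap k K) f * g ∈ J → g ∈ J := by
    intro g hg
    rw [mem_map_iff] at hg ⊢
    intro φ
    have := hg φ
    rw [coeffApply_mul] at this
    exact hreg _ this
  obtain ⟨l, hl1, hl0, hlreg⟩ := exists_linear he J hJ _ (hf.map _) hJreg
  have := numeric (hilbF K J) (hilbF K (J ⊔ Ideal.span {l})) D M h0
    (fun m hm => by rw [hJF, hM m hm])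
    (fun m => hilbF_section J hJhom l hl1 hl0 hlreg m)
    (fun m hm => hilbF_zero_succ _ _ hm)
  simpa only [hJF] using this

end HilbAux

/-- Hilbert function of a hypersurface section of a dimension-`0`
homogeneous unmixed radical ideal: `h_{(I,f)}(m) ≤ deg I` for `m ≥ 1` and
`h_{(I,f)}(m) = 0` for `m ≥ deg I + deg f − 1`. -/
theorem hilbert_function_hypersurface_section_dim_zero {k : Type*} [Field k]
    [PerfectField k] {n e : ℕ}
    (I : Ideal (MvPolynomial (Fin (n+1)) k)) (hhom : IsHomogeneousIdeal I)
    (hrad : I.IsRadical) (hunm : IsUnmixed k I 0) (hne : hilbP k I ≠ 0)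
    (hdim : idealDim k I = 0)
    (f : MvPolynomial (Fin (n+1)) k) (hf : f.IsHomogeneous e) (hf0 : f ≠ 0)
    (hreg : ∀ g, f * g ∈ I → g ∈ I) :
    (∀ m : ℕ, 1 ≤ m → hilbF k (I ⊔ Ideal.span {f}) m ≤ idealDeg k I) ∧
      ∀ m : ℕ, idealDeg k I + e - 1 ≤ m → hilbF k (I ⊔ Ideal.span {f}) m = 0 := by
  obtain ⟨hD, M, hM⟩ := idealDeg_spec I hne hdim
  have hsec := hilbF_section I hhom f hf hf0 hreg
  by_cases he : e = 0
  · subst he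
    have h0 : ∀ m, hilbF k (I ⊔ Ideal.span {f}) m = 0 := by
      intro m
      have := hsec m
      simp only [add_zero] at this
      omega
    exact ⟨fun m _ => by rw [h0]; omega, fun m _ => h0 m⟩
  · obtain ⟨h1, h2⟩ := hilbF_dim_zero he I hhom hD hM f hf hreg
    refine ⟨fun m _ => (hilbF_anti le_sup_left m).trans (h1 m), fun m hm => ?_⟩
    have h3 := hsec (m - e)
    rw [show m - e + e = m by omega, h2 m (by omega), h2 (m - e) (by omega)] at h3
    omega
end
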